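/- arXiv:1608.04575 — 2 statements merged into one kernel-verified Lean document; each statement's English description precedes it below -/
import Mathlib

section
/- Let a = (a₁,…,aₙ) ∈ [1,∞)ⁿ and let φ₀, φ, ψ₀, ψ ∈ 𝓢(ℝⁿ) be supported in {x ∈ ℝⁿ : xₙ < 0}, with φ and ψ having vanishing moments of all orders. Then for every η ∈ 𝓢(ℝⁿ) the series T η := Σ_{j=0}^∞ φ̌_j * (1_{ℝⁿ₊} · (ψ̌_j * η)) converges in 𝓢(ℝⁿ); the resulting map T : 𝓢(ℝⁿ) → 𝓢(ℝⁿ) is linear and continuous, every Tη is supported in the closed half-space {x : xₙ ≥ 0}, and the operator E_u(f) = Σ_{j=0}^∞ ψ_j * e₊(φ_j * f) satisfies ⟨E_u(f), η⟩ = ⟨f, Tη⟩ for all f ∈ 𝓢'(ℝⁿ) and η ∈ 𝓢(ℝⁿ). In particular E_u : 𝓢'(ℝⁿ) → 𝓢'(ℝⁿ) is weak*-continuous, and E_u(f) = E_u(g) whenever f, g ∈ 𝓢'(ℝⁿ) agree on all Schwartz functions supported in {x : xₙ ≥ 0}. -/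
/-!
Up to a change of variables, `ψ̌_j * η` at `x` averages `η(x + 2^{-ja} w)` against `ψ`. The moments
of `ψ` vanish, so any Taylor polynomial of `η` may be subtracted: `ψ̌_j * η` decays in `j` faster
than any prescribed geometric rate, in every polynomially weighted sup norm. The Schwartz seminorms
of `φ_j` grow at most geometrically, hence the series defining `Tη` converges absolutely in each
seminorm, with bounds by seminorms of `η`. Only the size of `1_{ℝⁿ₊} (ψ̌_j * η)` enters, never its
smoothness, so the truncation is harmless.

If `xₙ > 0 > yₙ` then `φ_j(x - y) = 0`; this confines every term, hence `Tη`, to `{yₙ ≥ 0}`.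

For the duality, a tempered distribution `f` is continuous for finitely many Schwartz seminorms, so
by Hahn–Banach it factors through a Banach space of weighted derivatives. There the convolution is
a Bochner integral of translates, which `f` therefore passes through.
-/

open MeasureTheory Filter Topology

noncomputable section

/-- Anisotropic dilation: `θ_0 = θ₀` and `θ_j(x) = 2^{j|a|} θ(2^{ja}x)` for `j ≥ 1`. -/
def anisoDil {m : ℕ} (a : Fin m → ℝ) (θ₀ θ : (Fin m → ℝ) → ℝ) (j : ℕ)
    (x : Fin m → ℝ) : ℝ :=
  if j = 0 then θ₀ x
  else (2:ℝ) ^ ((j:ℝ) * ∑ i, a i) * θ (fun i => (2:ℝ) ^ ((j:ℝ) * a i) * x i)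

/-- `θ` has vanishing moments of all orders. -/
def VanishingMoments {m : ℕ} (θ : (Fin m → ℝ) → ℝ) : Prop :=
  ∀ α : Fin m → ℕ, (∫ x : Fin m → ℝ, (∏ i, x i ^ α i) * θ x) = 0

namespace UniversalExtension

open scoped ContDiff SchwartzMap BoundedContinuousFunction

section Weights

variable {E F : Type*} [NormedAddCommGroup E] [NormedAddCommGroup F]

theorem one_add_norm_le_mul (x y : E) : 1 + ‖y‖ ≤ (1 + ‖x‖) * (1 + ‖y - x‖) := by
  have h : ‖y‖ ≤ ‖x‖ + ‖y - x‖ := by simpa using norm_add_le x (y - x)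
  nlinarith [mul_nonneg (norm_nonneg x) (norm_nonneg (y - x))]

theorem one_add_pow_mul_norm_le {g : E → F} {k n : ℕ} {B : ℝ}
    (hB : ∀ x, (1 + ‖x‖) ^ (k + n) * ‖g x‖ ≤ B) (x : E) :
    (1 + ‖x‖) ^ k * ‖g x‖ ≤ (1 + ‖x‖) ^ (-(n : ℝ)) * B := by
  have hpos : 0 < (1 + ‖x‖) ^ n := by positivity
  rw [Real.rpow_neg (by positivity), Real.rpow_natCast, inv_mul_eq_div, le_div_iff₀ hpos]
  exact le_of_eq_of_le (by ring) (hB x)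

variable [MeasurableSpace E] {μ : Measure E} [hμ : μ.HasTemperateGrowth]

instance hasTemperateGrowth_restrict (s : Set E) :
    (μ.restrict s).HasTemperateGrowth :=
  ⟨hμ.exists_integrable.imp fun _ h => h.restrict⟩

theorem integral_one_add_pow_mul_norm_le {g : E → F} {k : ℕ} {B : ℝ}
    (hB : ∀ x, (1 + ‖x‖) ^ (k + μ.integrablePower) * ‖g x‖ ≤ B) :
    ∫ x, (1 + ‖x‖) ^ k * ‖g x‖ ∂μ ≤ (∫ x, (1 + ‖x‖) ^ (-(μ.integrablePower : ℝ)) ∂μ) * B := by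
  rw [← integral_mul_const]
  exact integral_mono_of_nonneg (.of_forall fun x => by positivity)
    (μ.integrable_pow_neg_integrablePower.mul_const B)
    (.of_forall (one_add_pow_mul_norm_le hB))

end Weights

section SupSeminorm

variable {E F : Type*} [NormedAddCommGroup E] [NormedSpace ℝ E]
  [NormedAddCommGroup F] [NormedSpace ℝ F]

/-- The maximum of the Schwartz seminorms of index at most `(k, l)`. Unlike a single seminorm it
controls the inhomogeneous weight `(1 + ‖x‖) ^ k`. -/
def supSeminorm (k l : ℕ) : Seminorm ℝ 𝓢(E, F) :=
  (Finset.Iic (k, l)).sup (schwartzSeminormFamily ℝ E F)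

theorem supSeminorm_mono {k l k' l' : ℕ} (hk : k ≤ k') (hl : l ≤ l') (κ : 𝓢(E, F)) :
    supSeminorm k l κ ≤ supSeminorm k' l' κ :=
  Finset.sup_mono (f := schwartzSeminormFamily ℝ E F)
    (Finset.Iic_subset_Iic.2 (Prod.mk_le_mk.2 ⟨hk, hl⟩)) κ

theorem one_add_pow_mul_le_supSeminorm (k l : ℕ) (κ : 𝓢(E, F)) (x : E) :
    (1 + ‖x‖) ^ k * ‖iteratedFDeriv ℝ l κ x‖ ≤ 2 ^ k * supSeminorm k l κ :=
  SchwartzMap.one_add_le_sup_seminorm_apply (𝕜 := ℝ) (m := (k, l)) le_rfl le_rfl κ x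

theorem one_add_pow_mul_iteratedFDeriv_sub_le (k l : ℕ) (κ : 𝓢(E, F)) (x y : E) :
    (1 + ‖y‖) ^ k * ‖iteratedFDeriv ℝ l κ (y - x)‖ ≤
      (1 + ‖x‖) ^ k * (2 ^ k * supSeminorm k l κ) := by
  calc (1 + ‖y‖) ^ k * ‖iteratedFDeriv ℝ l κ (y - x)‖
      ≤ ((1 + ‖x‖) * (1 + ‖y - x‖)) ^ k * ‖iteratedFDeriv ℝ l κ (y - x)‖ := by
        gcongr; exact one_add_norm_le_mul x y
    _ = (1 + ‖x‖) ^ k * ((1 + ‖y - x‖) ^ k * ‖iteratedFDeriv ℝ l κ (y - x)‖) := by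
        rw [mul_pow, mul_assoc]
    _ ≤ _ := mul_le_mul_of_nonneg_left (one_add_pow_mul_le_supSeminorm k l κ (y - x))
          (by positivity)

theorem integrable_one_add_pow_mul_norm [MeasurableSpace E] [BorelSpace E] {μ : Measure E}
    [μ.HasTemperateGrowth] (κ : 𝓢(E, F)) (k : ℕ) :
    Integrable (fun x => (1 + ‖x‖) ^ k * ‖κ x‖) μ := by
  have hκ : ∀ x, (1 + ‖x‖) ^ (k + μ.integrablePower) * ‖κ x‖ ≤
      2 ^ (k + μ.integrablePower) * supSeminorm (k + μ.integrablePower) 0 κ := fun x => by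
    simpa using one_add_pow_mul_le_supSeminorm (k + μ.integrablePower) 0 κ x
  have hcont : Continuous fun x => (1 + ‖x‖) ^ k * ‖κ x‖ := by fun_prop
  exact (μ.integrable_pow_neg_integrablePower.mul_const _).mono' hcont.aestronglyMeasurable
    (.of_forall fun x => (Real.norm_of_nonneg (by positivity)).trans_le
      (one_add_pow_mul_norm_le hκ x))

end SupSeminorm

section Convolution

variable {E F : Type*} [NormedAddCommGroup E] [NormedSpace ℝ E]
  [NormedAddCommGroup F] [NormedSpace ℝ F]

theorem hasFDerivAt_iteratedFDeriv (κ : 𝓢(E, F)) (l : ℕ) (x : E) :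
    HasFDerivAt (iteratedFDeriv ℝ l κ) (iteratedFDeriv ℝ (l + 1) κ x).curryLeft x :=
  (contDiff_iff_ftaylorSeries.1 (κ.smooth ⊤)).fderiv l (mod_cast ENat.natCast_lt_top l) x

theorem continuous_iteratedFDeriv (κ : 𝓢(E, F)) (l : ℕ) : Continuous (iteratedFDeriv ℝ l κ) :=
  (κ.smooth ⊤).continuous_iteratedFDeriv (mod_cast le_top)

variable [MeasurableSpace E] [BorelSpace E] [SecondCountableTopology E] {μ : Measure E}

theorem hasFDerivAt_integral_smul_comp_sub {h : E → ℝ} (hh : Integrable h μ) {g : E → F}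
    {g' : E → E →L[ℝ] F} {B B' : ℝ} (hg : ∀ x, HasFDerivAt g (g' x) x) (hg' : Continuous g')
    (hB : ∀ x, ‖g x‖ ≤ B) (hB' : ∀ x, ‖g' x‖ ≤ B') (y : E) :
    HasFDerivAt (fun y => ∫ x, h x • g (y - x) ∂μ) (∫ x, h x • g' (y - x) ∂μ) y := by
  have hcont : Continuous g := continuous_iff_continuousAt.2 fun x => (hg x).continuousAt
  have hint : ∀ y, Integrable (fun x => h x • g (y - x)) μ := fun y =>
    hh.smul_bdd B (by fun_prop : Continuous fun x => g (y - x)).aestronglyMeasurable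
      (.of_forall fun x => hB (y - x))
  refine hasFDerivAt_integral_of_dominated_of_fderiv_le (F' := fun y x => h x • g' (y - x))
    (bound := fun x => ‖h x‖ * B') univ_mem (.of_forall fun y => (hint y).1) (hint y)
    (hh.1.smul (by fun_prop : Continuous fun x => g' (y - x)).aestronglyMeasurable)
    (.of_forall fun x y _ => ?_) (hh.norm.mul_const _) (.of_forall fun x y _ => ?_)
  · rw [norm_smul]
    exact mul_le_mul_of_nonneg_left (hB' _) (norm_nonneg _)
  · exact ((hg (y - x)).comp y ((hasFDerivAt_id y).sub_const x)).fun_const_smul (h x)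

variable [μ.HasTemperateGrowth]

theorem integrable_smul_iteratedFDeriv_sub (h : 𝓢(E, ℝ)) (l : ℕ) (κ : 𝓢(E, F)) (y : E) :
    Integrable (fun x => h x • iteratedFDeriv ℝ l κ (y - x)) μ :=
  h.integrable.smul_bdd _
    ((continuous_iteratedFDeriv κ l).comp (continuous_const.sub continuous_id)).aestronglyMeasurable
    (.of_forall fun x => κ.norm_iteratedFDeriv_le_seminorm ℝ l (y - x))

theorem hasFDerivAt_integral_smul_iteratedFDeriv_sub (h : 𝓢(E, ℝ)) (l : ℕ) (κ : 𝓢(E, F)) (y : E) :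
    HasFDerivAt (fun y => ∫ x, h x • iteratedFDeriv ℝ l κ (y - x) ∂μ)
      (∫ x, h x • iteratedFDeriv ℝ (l + 1) κ (y - x) ∂μ).curryLeft y := by
  let curry := continuousMultilinearCurryLeftEquiv ℝ (fun _ : Fin (l + 1) => E) F
  have hcurry := ContinuousLinearEquiv.integral_comp_comm (𝕜 := ℝ) (μ := μ)
    (E := E [×l + 1]→L[ℝ] F) (F := E →L[ℝ] E [×l]→L[ℝ] F) curry.toContinuousLinearEquiv
    fun x => h x • iteratedFDeriv ℝ (l + 1) κ (y - x)
  refine HasFDerivAt.congr_fderiv ?_ hcurry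
  exact hasFDerivAt_integral_smul_comp_sub h.integrable (hasFDerivAt_iteratedFDeriv κ l)
    (curry.continuous.comp (continuous_iteratedFDeriv κ (l + 1)))
    (κ.norm_iteratedFDeriv_le_seminorm ℝ l)
    (fun x => (curry.norm_map _).trans_le (κ.norm_iteratedFDeriv_le_seminorm ℝ (l + 1) x)) y

theorem hasFTaylorSeriesUpTo_integral_smul_comp_sub (h : 𝓢(E, ℝ)) (κ : 𝓢(E, F)) :
    HasFTaylorSeriesUpTo ∞ (fun y => ∫ x, h x • κ (y - x) ∂μ)
      fun y l => ∫ x, h x • iteratedFDeriv ℝ l κ (y - x) ∂μ where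
  zero_eq _ := ((continuousMultilinearCurryFin0 ℝ E
    F).toContinuousLinearEquiv.integral_comp_comm _).symm
  fderiv l _ y := hasFDerivAt_integral_smul_iteratedFDeriv_sub h l κ y
  cont l _ := continuous_iff_continuousAt.2 fun y =>
    (hasFDerivAt_integral_smul_iteratedFDeriv_sub h l κ y).continuousAt

theorem iteratedFDeriv_integral_smul_comp_sub (h : 𝓢(E, ℝ)) (κ : 𝓢(E, F)) (l : ℕ) (y : E) :
    iteratedFDeriv ℝ l (fun y => ∫ x, h x • κ (y - x) ∂μ) y =
      ∫ x, h x • iteratedFDeriv ℝ l κ (y - x) ∂μ :=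
  ((hasFTaylorSeriesUpTo_integral_smul_comp_sub h κ).eq_iteratedFDeriv (mod_cast le_top) y).symm

theorem norm_pow_mul_iteratedFDeriv_integral_le (h : 𝓢(E, ℝ)) (κ : 𝓢(E, F)) (k l : ℕ) (y : E) :
    ‖y‖ ^ k * ‖iteratedFDeriv ℝ l (fun y => ∫ x, h x • κ (y - x) ∂μ) y‖ ≤
      (∫ x, (1 + ‖x‖) ^ k * ‖h x‖ ∂μ) * (2 ^ k * supSeminorm k l κ) := by
  rw [iteratedFDeriv_integral_smul_comp_sub, ← integral_mul_const]
  calc ‖y‖ ^ k * ‖∫ x, h x • iteratedFDeriv ℝ l κ (y - x) ∂μ‖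
      = ‖∫ x, ‖y‖ ^ k • h x • iteratedFDeriv ℝ l κ (y - x) ∂μ‖ := by
        rw [integral_smul, norm_smul, norm_pow, norm_norm]
    _ ≤ ∫ x, (1 + ‖x‖) ^ k * ‖h x‖ * (2 ^ k * supSeminorm k l κ) ∂μ := by
        refine norm_integral_le_of_norm_le ((integrable_one_add_pow_mul_norm h k).mul_const _)
          (.of_forall fun x => ?_)
        rw [norm_smul, norm_smul, norm_pow, norm_norm]
        calc ‖y‖ ^ k * (‖h x‖ * ‖iteratedFDeriv ℝ l κ (y - x)‖)
            ≤ (1 + ‖y‖) ^ k * (‖h x‖ * ‖iteratedFDeriv ℝ l κ (y - x)‖) := by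
              gcongr; linarith
          _ = ‖h x‖ * ((1 + ‖y‖) ^ k * ‖iteratedFDeriv ℝ l κ (y - x)‖) := by ring
          _ ≤ ‖h x‖ * ((1 + ‖x‖) ^ k * (2 ^ k * supSeminorm k l κ)) := by
              exact mul_le_mul_of_nonneg_left (one_add_pow_mul_iteratedFDeriv_sub_le k l κ x y)
                (norm_nonneg _)
          _ = _ := by ring

variable (μ) in
/-- The convolution `(h μ) * κ : y ↦ ∫ h(x) κ(y - x) dμ(x)` of the measure with density `h` and the
Schwartz function `κ`, itself a Schwartz function. A general `μ` covers both the ordinary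
convolution and the convolution with a truncation `1_s h`. -/
def densityConv (h : 𝓢(E, ℝ)) (κ : 𝓢(E, F)) : 𝓢(E, F) where
  toFun y := ∫ x, h x • κ (y - x) ∂μ
  smooth' := (hasFTaylorSeriesUpTo_integral_smul_comp_sub h κ).contDiff
  decay' k l := ⟨_, norm_pow_mul_iteratedFDeriv_integral_le h κ k l⟩

theorem densityConv_apply (h : 𝓢(E, ℝ)) (κ : 𝓢(E, F)) (y : E) :
    densityConv μ h κ y = ∫ x, h x • κ (y - x) ∂μ := rfl

theorem seminorm_densityConv_le (h : 𝓢(E, ℝ)) (κ : 𝓢(E, F)) (k l : ℕ) :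
    SchwartzMap.seminorm ℝ k l (densityConv μ h κ) ≤
      (∫ x, (1 + ‖x‖) ^ k * ‖h x‖ ∂μ) * (2 ^ k * supSeminorm k l κ) :=
  SchwartzMap.seminorm_le_bound ℝ k l _
    (mul_nonneg (integral_nonneg fun x => by positivity) (by positivity))
    (norm_pow_mul_iteratedFDeriv_integral_le h κ k l)

theorem integrable_smul_comp_sub (h : 𝓢(E, ℝ)) (κ : 𝓢(E, F)) (y : E) :
    Integrable (fun x => h x • κ (y - x)) μ :=
  (continuousMultilinearCurryFin0 ℝ E F).toContinuousLinearEquiv.integrable_comp_iff.2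
    (integrable_smul_iteratedFDeriv_sub h 0 κ y)

variable (μ) in
/-- The convolution `densityConv μ h κ` as a linear map in the density `h`. -/
def densityConvₗ (κ : 𝓢(E, F)) : 𝓢(E, ℝ) →ₗ[ℝ] 𝓢(E, F) where
  toFun h := densityConv μ h κ
  map_add' h₁ h₂ := by
    ext y
    simp only [densityConv_apply, add_apply, add_smul]
    exact integral_add (integrable_smul_comp_sub h₁ κ y) (integrable_smul_comp_sub h₂ κ y)
  map_smul' c h := by
    ext y
    simp only [densityConv_apply, smul_apply, smul_assoc, RingHom.id_apply,
      integral_smul]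

theorem densityConvₗ_apply (κ : 𝓢(E, F)) (h : 𝓢(E, ℝ)) :
    densityConvₗ μ κ h = densityConv μ h κ := rfl

end Convolution

section HahnBanach

variable {V W : Type*} [AddCommGroup V] [Module ℝ V] [NormedAddCommGroup W] [NormedSpace ℝ W]

theorem exists_dual_comp_eq_of_norm_le {J : V →ₗ[ℝ] W} {f : V →ₗ[ℝ] ℝ} {C : ℝ}
    (hf : ∀ u, ‖f u‖ ≤ C * ‖J u‖) : ∃ g : StrongDual ℝ W, ∀ u, f u = g (J u) := by
  have hker : LinearMap.ker J ≤ LinearMap.ker f := fun u hu => by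
    have hJu : J u = 0 := hu
    simpa [hJu] using hf u
  obtain ⟨g₀, hg₀⟩ : ∃ g₀ : Module.Dual ℝ W, J.dualMap g₀ = f := by
    rwa [← LinearMap.mem_range, LinearMap.range_dualMap_eq_dualAnnihilator_ker,
      Submodule.mem_dualAnnihilator]
  obtain ⟨g, hg, -⟩ := exists_extension_norm_eq (LinearMap.range J)
    ((g₀.domRestrict (LinearMap.range J)).mkContinuous C (by
      rintro ⟨_, u, rfl⟩
      simpa [← hg₀] using hf u))
  refine ⟨g, fun u => ?_⟩
  rw [← hg₀]
  exact (hg ⟨J u, u, rfl⟩).symm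

end HahnBanach

section Translation

variable {E F : Type*} [NormedAddCommGroup E] [NormedSpace ℝ E]
  [NormedAddCommGroup F] [NormedSpace ℝ F]

theorem iteratedFDeriv_compSubConstCLM (l : ℕ) (κ : 𝓢(E, F)) (x y : E) :
    iteratedFDeriv ℝ l (κ.compSubConstCLM ℝ x) y = iteratedFDeriv ℝ l κ (y - x) :=
  iteratedFDeriv_comp_sub l x y

theorem seminorm_compSubConstCLM_sub_le (k l : ℕ) (κ : 𝓢(E, F)) {x : E} (hx : ‖x‖ ≤ 1) :
    SchwartzMap.seminorm ℝ k l (κ.compSubConstCLM ℝ x - κ) ≤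
      2 ^ k * (2 ^ k * supSeminorm k (l + 1) κ) * ‖x‖ := by
  refine SchwartzMap.seminorm_le_bound ℝ k l _ (by positivity) fun y => ?_
  have hsub : iteratedFDeriv ℝ l (κ.compSubConstCLM ℝ x - κ) y =
      iteratedFDeriv ℝ l κ (y - x) - iteratedFDeriv ℝ l κ y := by
    rw [← iteratedFDeriv_compSubConstCLM]
    exact iteratedFDeriv_sub_apply ((SchwartzMap.smooth _ ⊤).contDiffAt.of_le (mod_cast le_top))
      ((SchwartzMap.smooth _ ⊤).contDiffAt.of_le (mod_cast le_top))
  have hderiv : ∀ z ∈ Metric.closedBall y ‖x‖, ‖(iteratedFDeriv ℝ (l + 1) κ z).curryLeft‖ ≤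
      2 ^ k * (2 ^ k * supSeminorm k (l + 1) κ) / (1 + ‖y‖) ^ k := by
    intro z hz
    have hyz : ‖y - z‖ ≤ 1 := by
      rw [← dist_eq_norm, dist_comm]; exact (Metric.mem_closedBall.1 hz).trans hx
    rw [ContinuousMultilinearMap.curryLeft_norm, le_div_iff₀ (by positivity), mul_comm]
    have h := one_add_pow_mul_iteratedFDeriv_sub_le k (l + 1) κ (y - z) y
    rw [sub_sub_cancel] at h
    refine h.trans ?_
    gcongr
    linarith
  have hmv := (convex_closedBall y ‖x‖).norm_image_sub_le_of_norm_hasFDerivWithin_le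
    (fun z _ => (hasFDerivAt_iteratedFDeriv κ l z).hasFDerivWithinAt) hderiv
    (Metric.mem_closedBall_self (norm_nonneg x))
    (show y - x ∈ Metric.closedBall y ‖x‖ by simp [Metric.mem_closedBall])
  rw [hsub]
  calc ‖y‖ ^ k * ‖iteratedFDeriv ℝ l κ (y - x) - iteratedFDeriv ℝ l κ y‖
      ≤ (1 + ‖y‖) ^ k *
        (2 ^ k * (2 ^ k * supSeminorm k (l + 1) κ) / (1 + ‖y‖) ^ k * ‖x‖) := by
        gcongr
        · simp
        · simpa using hmv
    _ = _ := by field_simp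

theorem continuous_compSubConstCLM (κ : 𝓢(E, F)) :
    Continuous fun x : E => κ.compSubConstCLM ℝ x := by
  rw [continuous_iff_continuousAt]
  intro x₀
  rw [ContinuousAt, (schwartz_withSeminorms ℝ E F).tendsto_nhds]
  rintro ⟨k, l⟩ ε hε
  set C := 2 ^ k * (2 ^ k * supSeminorm k (l + 1) (κ.compSubConstCLM ℝ x₀))
  have hlim : Tendsto (fun x : E => C * ‖x - x₀‖) (𝓝 x₀) (𝓝 0) := by
    have hcont : Continuous fun x : E => C * ‖x - x₀‖ := by fun_prop
    simpa using hcont.tendsto x₀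
  filter_upwards [hlim.eventually (gt_mem_nhds hε), Metric.closedBall_mem_nhds x₀ one_pos]
    with x hx hx1
  refine lt_of_le_of_lt ?_ hx
  simpa using seminorm_compSubConstCLM_sub_le k l (κ.compSubConstCLM ℝ x₀)
    (x := x - x₀) (by simpa [dist_eq_norm] using hx1)

end Translation

section Jet

variable {E F : Type*} [NormedAddCommGroup E] [NormedSpace ℝ E]
  [NormedAddCommGroup F] [NormedSpace ℝ F]

/-- Bounded continuous functions with values in a normed group. Unlike for the expression
`X →ᵇ G`, the topology of `G` is the norm topology on the nose, also for spaces `G` of multilinear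
maps. -/
abbrev NormedBoundedFunctions (X G : Type*) [TopologicalSpace X] [NormedAddCommGroup G] :
    Type _ :=
  X →ᵇ G

variable (E F) in
/-- The map `u ↦ ‖·‖ ^ k • D^l u` from Schwartz functions to bounded continuous functions; its
sup norm is the `(k, l)`-th Schwartz seminorm. -/
def weightedDerivCLM (k l : ℕ) : 𝓢(E, F) →L[ℝ] NormedBoundedFunctions E (E [×l]→L[ℝ] F) :=
  SchwartzMap.mkCLMtoNormedSpace (D := E) (E := F) (G := NormedBoundedFunctions E (E [×l]→L[ℝ] F))
    (σ := RingHom.id ℝ)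
    (fun u => BoundedContinuousFunction.ofNormedAddCommGroup
      (fun y => ‖y‖ ^ k • iteratedFDeriv ℝ l u y)
      ((continuous_norm.pow k).smul (continuous_iteratedFDeriv u l))
      (SchwartzMap.seminorm ℝ k l u)
      (fun y => by simpa [norm_smul] using SchwartzMap.le_seminorm ℝ k l u y))
    (fun u v => by
      ext1 y
      have hadd : iteratedFDeriv ℝ l (⇑u + ⇑v) y =
          iteratedFDeriv ℝ l u y + iteratedFDeriv ℝ l v y :=
        iteratedFDeriv_add_apply ((SchwartzMap.smooth _ ⊤).contDiffAt.of_le (mod_cast le_top))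
          ((SchwartzMap.smooth _ ⊤).contDiffAt.of_le (mod_cast le_top))
      simp [hadd])
    (fun c u => by
      ext1 y
      have hsmul : iteratedFDeriv ℝ l (c • ⇑u) y = c • iteratedFDeriv ℝ l u y :=
        iteratedFDeriv_const_smul_apply
          ((SchwartzMap.smooth _ ⊤).contDiffAt.of_le (mod_cast le_top))
      simp [hsmul, smul_comm c])
    ⟨{(k, l)}, 1, zero_le_one, fun u => by
      simpa using BoundedContinuousFunction.norm_ofNormedAddCommGroup_le _ (apply_nonneg _ _) _⟩

theorem weightedDerivCLM_apply (k l : ℕ) (u : 𝓢(E, F)) (y : E) :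
    weightedDerivCLM E F k l u y = ‖y‖ ^ k • iteratedFDeriv ℝ l u y := rfl

theorem seminorm_le_norm_weightedDerivCLM (k l : ℕ) (u : 𝓢(E, F)) :
    SchwartzMap.seminorm ℝ k l u ≤ ‖weightedDerivCLM E F k l u‖ :=
  SchwartzMap.seminorm_le_bound ℝ k l u (norm_nonneg _) fun y => by
    simpa [weightedDerivCLM_apply, norm_smul] using
      (weightedDerivCLM E F k l u).norm_coe_le_norm y

theorem norm_weightedDerivCLM_compSubConstCLM_le (k l : ℕ) (κ : 𝓢(E, F)) (x : E) :
    ‖weightedDerivCLM E F k l (κ.compSubConstCLM ℝ x)‖ ≤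
      (1 + ‖x‖) ^ k * (2 ^ k * supSeminorm k l κ) := by
  refine (BoundedContinuousFunction.norm_le (by positivity)).2 fun y => ?_
  refine le_trans ?_ (one_add_pow_mul_iteratedFDeriv_sub_le k l κ x y)
  rw [weightedDerivCLM_apply, iteratedFDeriv_compSubConstCLM, norm_smul, norm_pow, norm_norm]
  gcongr
  simp

variable (E F) in
/-- The finitely many weighted derivatives with indices in `s`, collected in one Banach-space
valued map; every tempered distribution is continuous with respect to one of these. -/
def jetCLM (s : Finset (ℕ × ℕ)) :
    𝓢(E, F) →L[ℝ] (i : s) → NormedBoundedFunctions E (E [×i.1.2]→L[ℝ] F) :=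
  ContinuousLinearMap.pi fun i => weightedDerivCLM E F i.1.1 i.1.2

theorem exists_dual_comp_jetCLM (f : 𝓢(E, F) →L[ℝ] ℝ) :
    ∃ (s : Finset (ℕ × ℕ))
      (g : StrongDual ℝ ((i : s) → NormedBoundedFunctions E (E [×i.1.2]→L[ℝ] F))),
      ∀ u, f u = g (jetCLM E F s u) := by
  obtain ⟨s, C, -, hfC⟩ := Seminorm.bound_of_continuous (schwartz_withSeminorms ℝ E F)
    ((normSeminorm ℝ ℝ).comp f.toLinearMap) (continuous_norm.comp f.continuous)
  refine ⟨s, exists_dual_comp_eq_of_norm_le (J := (jetCLM E F s).toLinearMap)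
    (f := f.toLinearMap) (C := C) fun u => ?_⟩
  refine (hfC u).trans (mul_le_mul_of_nonneg_left ?_ C.2)
  exact Seminorm.finset_sup_apply_le (norm_nonneg _) fun i hi =>
    (seminorm_le_norm_weightedDerivCLM i.1 i.2 u).trans
      (norm_le_pi_norm (jetCLM E F s u) (⟨i, hi⟩ : s))

variable [MeasurableSpace E] [BorelSpace E] [SecondCountableTopology E]
  {μ : Measure E} [μ.HasTemperateGrowth]

theorem integrable_smul_weightedDerivCLM (h : 𝓢(E, ℝ)) (κ : 𝓢(E, F)) (k l : ℕ) :
    Integrable (fun x => h x • weightedDerivCLM E F k l (κ.compSubConstCLM ℝ x)) μ := by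
  refine ((integrable_one_add_pow_mul_norm h k).mul_const (2 ^ k * supSeminorm k l κ)).mono'
    (h.continuous.smul ((weightedDerivCLM E F k l).continuous.comp
      (continuous_compSubConstCLM κ))).aestronglyMeasurable (.of_forall fun x => ?_)
  rw [norm_smul]
  refine (mul_le_mul_of_nonneg_left (norm_weightedDerivCLM_compSubConstCLM_le k l κ x)
    (norm_nonneg _)).trans_eq (by ring)

theorem weightedDerivCLM_densityConv [CompleteSpace F] (h : 𝓢(E, ℝ)) (κ : 𝓢(E, F)) (k l : ℕ) :
    weightedDerivCLM E F k l (densityConv μ h κ) =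
      ∫ x, h x • weightedDerivCLM E F k l (κ.compSubConstCLM ℝ x) ∂μ := by
  ext1 y
  have heval := (BoundedContinuousFunction.evalCLM ℝ y).integral_comp_comm
    (integrable_smul_weightedDerivCLM (μ := μ) h κ k l)
  refine Eq.trans ?_ heval
  calc ‖y‖ ^ k • iteratedFDeriv ℝ l (fun y => ∫ x, h x • κ (y - x) ∂μ) y
      = ∫ x, ‖y‖ ^ k • h x • iteratedFDeriv ℝ l κ (y - x) ∂μ := by
        rw [iteratedFDeriv_integral_smul_comp_sub, integral_smul]
    _ = ∫ x, h x • ‖y‖ ^ k • iteratedFDeriv ℝ l (κ.compSubConstCLM ℝ x) y ∂μ := by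
        simp only [iteratedFDeriv_compSubConstCLM, smul_comm (‖y‖ ^ k)]

theorem map_densityConv [CompleteSpace F] (f : 𝓢(E, F) →L[ℝ] ℝ) (h : 𝓢(E, ℝ)) (κ : 𝓢(E, F)) :
    f (densityConv μ h κ) = ∫ x, h x * f (κ.compSubConstCLM ℝ x) ∂μ := by
  obtain ⟨s, g, hg⟩ := exists_dual_comp_jetCLM f
  have hint : Integrable (fun x => h x • jetCLM E F s (κ.compSubConstCLM ℝ x)) μ :=
    .of_eval fun i => integrable_smul_weightedDerivCLM h κ i.1.1 i.1.2
  have hjet : jetCLM E F s (densityConv μ h κ) =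
      ∫ x, h x • jetCLM E F s (κ.compSubConstCLM ℝ x) ∂μ := by
    ext1 i
    rw [eval_integral fun i => integrable_smul_weightedDerivCLM h κ i.1.1 i.1.2]
    exact weightedDerivCLM_densityConv h κ i.1.1 i.1.2
  calc f (densityConv μ h κ)
      = ∫ x, g (h x • jetCLM E F s (κ.compSubConstCLM ℝ x)) ∂μ := by
        rw [hg, hjet, g.integral_comp_comm hint]
    _ = _ := by simp only [map_smul, smul_eq_mul, hg]

end Jet

section Taylor

open scoped Nat

variable {E F : Type*} [NormedAddCommGroup E] [NormedSpace ℝ E]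
  [NormedAddCommGroup F] [NormedSpace ℝ F] [CompleteSpace F]

theorem norm_sub_taylor_le {f : E → F} (hf : ContDiff ℝ ∞ f) (x v : E) (M : ℕ) {C : ℝ}
    (hC : ∀ t ∈ Set.Icc (0 : ℝ) 1, ‖iteratedFDeriv ℝ M f (x + t • v)‖ ≤ C) :
    ‖f (x + v) - ∑ m ∈ Finset.range M, (m ! : ℝ)⁻¹ • iteratedFDeriv ℝ m f x fun _ => v‖ ≤
      C * ‖v‖ ^ M := by
  cases M with
  | zero => simpa using hC 1 (by simp)
  | succ n =>
    have hpoint : ∀ t ∈ Set.uIoc (0 : ℝ) 1,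
        ‖(1 - t) ^ n • iteratedFDeriv ℝ (n + 1) f (x + t • v) fun _ => v‖ ≤
          C * ‖v‖ ^ (n + 1) := by
      intro t ht
      rw [Set.uIoc_of_le zero_le_one] at ht
      rw [norm_smul, norm_pow, Real.norm_of_nonneg (sub_nonneg.2 ht.2)]
      refine (mul_le_of_le_one_left (norm_nonneg _)
        (pow_le_one₀ (sub_nonneg.2 ht.2) (by linarith [ht.1]))).trans ?_
      refine (ContinuousMultilinearMap.le_opNorm _ _).trans ?_
      rw [Finset.prod_const, Finset.card_univ, Fintype.card_fin]
      gcongr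
      exact hC t ⟨ht.1.le, ht.2⟩
    have hrem := intervalIntegral.norm_integral_le_of_norm_le_const hpoint
    rw [sub_zero, abs_one, mul_one] at hrem
    rw [map_add_eq_sum_add_integral_iteratedFDeriv (n := n)
      fun t _ => hf.contDiffAt.of_le (mod_cast le_top), add_sub_cancel_left, norm_smul, norm_inv,
      Real.norm_natCast]
    refine (mul_le_of_le_one_left (norm_nonneg _) (inv_le_one_of_one_le₀ ?_)).trans hrem
    exact_mod_cast Nat.factorial_pos n

end Taylor

section Moments

open scoped Nat

variable {E G : Type*} [NormedAddCommGroup E] [NormedSpace ℝ E]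
  [NormedAddCommGroup G] [NormedSpace ℝ G]

theorem one_add_pow_mul_norm_sub_taylor_le {F : Type*} [NormedAddCommGroup F] [NormedSpace ℝ F]
    [CompleteSpace F] (N M : ℕ) (η : 𝓢(G, F)) (x v : G) :
    (1 + ‖x‖) ^ N *
        ‖η (x + v) - ∑ m ∈ Finset.range M, (m ! : ℝ)⁻¹ • iteratedFDeriv ℝ m η x fun _ => v‖ ≤
      (1 + ‖v‖) ^ N * (2 ^ N * supSeminorm N M η) * ‖v‖ ^ M := by
  have hpos : 0 < (1 + ‖x‖) ^ N := by positivity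
  have hsegment : ∀ t ∈ Set.Icc (0 : ℝ) 1, ‖iteratedFDeriv ℝ M η (x + t • v)‖ ≤
      (1 + ‖v‖) ^ N * (2 ^ N * supSeminorm N M η) / (1 + ‖x‖) ^ N := by
    intro t ht
    rw [le_div_iff₀' hpos]
    have h := one_add_pow_mul_iteratedFDeriv_sub_le N M η (-(t • v)) x
    rw [sub_neg_eq_add, norm_neg] at h
    refine h.trans ?_
    gcongr
    rw [norm_smul, Real.norm_of_nonneg ht.1]
    exact mul_le_of_le_one_left (norm_nonneg v) ht.2
  rw [← le_div_iff₀' hpos, mul_div_right_comm]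
  exact norm_sub_taylor_le (η.smooth ⊤) x v M hsegment

variable [MeasurableSpace E] {μ : Measure E}

variable (μ) in
/-- All moments of `θ` of order less than `M` vanish. The moments are indexed by multilinear forms
rather than by monomials, which makes them independent of a basis and directly applicable to the
terms of a Taylor expansion. -/
def HasVanishingMomentsBelow (M : ℕ) (θ : E → ℝ) : Prop :=
  ∀ m < M, ∀ A : E [×m]→L[ℝ] ℝ, ∫ w, θ w * A (fun _ => w) ∂μ = 0

variable [BorelSpace E] [μ.HasTemperateGrowth]

theorem integrable_mul_multilinear (θ : 𝓢(E, ℝ)) {m : ℕ} (A : E [×m]→L[ℝ] ℝ) :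
    Integrable (fun w => θ w * A fun _ => w) μ := by
  have hcont : Continuous fun w => θ w * A fun _ => w := by fun_prop
  refine ((integrable_one_add_pow_mul_norm θ m).const_mul ‖A‖).mono'
    hcont.aestronglyMeasurable (.of_forall fun w => ?_)
  have hA : ‖A fun _ => w‖ ≤ ‖A‖ * (1 + ‖w‖) ^ m := by
    refine (A.le_opNorm _).trans ?_
    rw [Finset.prod_const, Finset.card_univ, Fintype.card_fin]
    gcongr
    linarith
  rw [norm_mul]
  exact (mul_le_mul_of_nonneg_left hA (norm_nonneg _)).trans_eq (by ring)

theorem integral_mul_taylor_eq_zero {θ : 𝓢(E, ℝ)} {M : ℕ} (hθ : HasVanishingMomentsBelow μ M θ)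
    (η : 𝓢(G, ℝ)) (L : E →L[ℝ] G) (x : G) :
    Integrable (fun w => θ w *
        ∑ m ∈ Finset.range M, (m ! : ℝ)⁻¹ • iteratedFDeriv ℝ m η x fun _ => L w) μ ∧
      ∫ w, θ w * ∑ m ∈ Finset.range M, (m ! : ℝ)⁻¹ • iteratedFDeriv ℝ m η x (fun _ => L w) ∂μ
        = 0 := by
  let A (m : ℕ) : E [×m]→L[ℝ] ℝ :=
    (m ! : ℝ)⁻¹ • (iteratedFDeriv ℝ m η x).compContinuousLinearMap fun _ => L
  have hsum : ∀ w, (θ w * ∑ m ∈ Finset.range M, (m ! : ℝ)⁻¹ • iteratedFDeriv ℝ m η x fun _ => L w)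
      = ∑ m ∈ Finset.range M, θ w * A m fun _ => w := fun w => Finset.mul_sum _ _ _
  have hint : ∀ m ∈ Finset.range M, Integrable (fun w => θ w * A m fun _ => w) μ :=
    fun m _ => integrable_mul_multilinear θ (A m)
  simp only [hsum]
  refine ⟨integrable_finsetSum _ hint, ?_⟩
  rw [integral_finsetSum _ hint]
  exact Finset.sum_eq_zero fun m hm => hθ m (Finset.mem_range.1 hm) (A m)

theorem one_add_pow_mul_integral_comp_le [SecondCountableTopology E] {θ : 𝓢(E, ℝ)} {M : ℕ}
    (hθ : HasVanishingMomentsBelow μ M θ) (N : ℕ) (η : 𝓢(G, ℝ)) {L : E →L[ℝ] G} {r : ℝ}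
    (hr : r ≤ 1) (hL : ‖L‖ ≤ r) (x : G) :
    (1 + ‖x‖) ^ N * ‖∫ w, θ w * η (x + L w) ∂μ‖ ≤
      r ^ M * (∫ w, (1 + ‖w‖) ^ (N + M) * ‖θ w‖ ∂μ) * (2 ^ N * supSeminorm N M η) := by
  obtain ⟨hPint, hPzero⟩ := integral_mul_taylor_eq_zero hθ η L x
  set P : E → ℝ := fun w =>
    ∑ m ∈ Finset.range M, (m ! : ℝ)⁻¹ • iteratedFDeriv ℝ m η x fun _ => L w
  have hηint : Integrable (fun w => θ w * η (x + L w)) μ :=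
    θ.integrable.mul_bdd (by fun_prop : Continuous fun w => η (x + L w)).aestronglyMeasurable
      (.of_forall fun w => η.norm_le_seminorm ℝ (x + L w))
  have hpoint : ∀ w, (1 + ‖x‖) ^ N * ‖η (x + L w) - P w‖ ≤
      r ^ M * (1 + ‖w‖) ^ (N + M) * (2 ^ N * supSeminorm N M η) := by
    intro w
    have hr₀ : 0 ≤ r := (norm_nonneg L).trans hL
    have hLw : ‖L w‖ ≤ r * ‖w‖ := L.le_of_opNorm_le hL w
    calc (1 + ‖x‖) ^ N * ‖η (x + L w) - P w‖
        ≤ (1 + ‖L w‖) ^ N * (2 ^ N * supSeminorm N M η) * ‖L w‖ ^ M :=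
          one_add_pow_mul_norm_sub_taylor_le N M η x (L w)
      _ ≤ (1 + ‖w‖) ^ N * (2 ^ N * supSeminorm N M η) * (r * (1 + ‖w‖)) ^ M := by
          gcongr
          · exact hLw.trans (mul_le_of_le_one_left (norm_nonneg w) hr)
          · exact hLw.trans (by gcongr; linarith)
      _ = _ := by rw [mul_pow, pow_add]; ring
  have hcancel : ∫ w, θ w * η (x + L w) ∂μ = ∫ w, θ w * (η (x + L w) - P w) ∂μ := by
    simp only [mul_sub]
    rw [integral_sub hηint hPint, hPzero, sub_zero]
  rw [hcancel, ← integral_const_mul, ← integral_mul_const,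
    ← Real.norm_of_nonneg (by positivity : 0 ≤ (1 + ‖x‖) ^ N), ← norm_mul, ← integral_const_mul]
  refine norm_integral_le_of_norm_le
    (((integrable_one_add_pow_mul_norm θ (N + M)).const_mul _).mul_const _) (.of_forall fun w => ?_)
  rw [norm_mul, norm_mul, Real.norm_of_nonneg (by positivity : 0 ≤ (1 + ‖x‖) ^ N)]
  nlinarith [mul_le_mul_of_nonneg_left (hpoint w) (norm_nonneg (θ w))]

end Moments

section Monomials

variable {d : ℕ}

theorem prod_comp_eq_prod_pow_card {m : ℕ} (r : Fin m → Fin d) (w : Fin d → ℝ) :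
    ∏ i, w (r i) = ∏ k, w k ^ (Finset.univ.filter fun i => r i = k).card := by
  rw [← Finset.prod_fiberwise Finset.univ r fun i => w (r i)]
  refine Finset.prod_congr rfl fun k _ => ?_
  rw [Finset.prod_congr rfl fun i hi => by rw [(Finset.mem_filter.1 hi).2], Finset.prod_const]

theorem multilinear_diagonal_eq_sum {m : ℕ} (A : (Fin d → ℝ) [×m]→L[ℝ] ℝ) (w : Fin d → ℝ) :
    (A fun _ => w) = ∑ r : Fin m → Fin d, A (fun i => Pi.single (r i) 1) * ∏ i, w (r i) := by
  have hbasis : w = ∑ k, w k • (Pi.single k 1 : Fin d → ℝ) := pi_eq_sum_univ' w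
  calc (A fun _ => w) = A fun _ : Fin m => ∑ k, w k • (Pi.single k 1 : Fin d → ℝ) := by
        rw [← hbasis]
    _ = _ := by
        rw [A.map_sum]
        exact Finset.sum_congr rfl fun r _ => by rw [A.map_smul_univ, smul_eq_mul, mul_comm]

theorem integrable_mul_prod_comp (θ : 𝓢(Fin d → ℝ, ℝ)) {m : ℕ} (r : Fin m → Fin d) :
    Integrable fun w => θ w * ∏ i, w (r i) := by
  simpa using integrable_mul_multilinear (μ := volume) θ
    ((ContinuousMultilinearMap.mkPiAlgebra ℝ (Fin m) ℝ).compContinuousLinearMap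
      fun i => ContinuousLinearMap.proj (r i))

theorem hasVanishingMomentsBelow_of_vanishingMoments {θ : 𝓢(Fin d → ℝ, ℝ)}
    (hθ : VanishingMoments θ) (M : ℕ) : HasVanishingMomentsBelow volume M θ := by
  intro m _ A
  have hmonomial : ∀ r : Fin m → Fin d, ∫ w, θ w * ∏ i, w (r i) = 0 := fun r => by
    simp only [prod_comp_eq_prod_pow_card, mul_comm (θ _)]
    exact hθ _
  simp only [multilinear_diagonal_eq_sum, Finset.mul_sum, mul_left_comm (θ _)]
  rw [integral_finsetSum _ fun r _ => (integrable_mul_prod_comp θ r).const_mul _]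
  simp only [integral_const_mul, hmonomial, mul_zero, Finset.sum_const_zero]

end Monomials

section Series

variable {ι E F : Type*} [NormedAddCommGroup E] [NormedSpace ℝ E]
  [NormedAddCommGroup F] [NormedSpace ℝ F] {u : ι → 𝓢(E, F)}

theorem hasSum_schwartz_apply {v : 𝓢(E, F)} (hu : HasSum u v) (y : E) :
    HasSum (fun j => u j y) (v y) :=
  hu.mapL (BoundedContinuousFunction.evalCLM ℝ y ∘L
    SchwartzMap.toBoundedContinuousFunctionCLM ℝ E F)

variable [CompleteSpace F]

theorem norm_pow_mul_iteratedFDeriv_tsum_le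
    (hu : ∀ k l : ℕ, Summable fun j => SchwartzMap.seminorm ℝ k l (u j)) (k l : ℕ) (x : E) :
    ‖x‖ ^ k * ‖iteratedFDeriv ℝ l (fun y => ∑' j, u j y) x‖ ≤
      ∑' j, SchwartzMap.seminorm ℝ k l (u j) := by
  have hnorm : Summable fun j => ‖iteratedFDeriv ℝ l (u j) x‖ :=
    .of_nonneg_of_le (fun _ => norm_nonneg _)
      (fun j => (u j).norm_iteratedFDeriv_le_seminorm ℝ l x) (hu 0 l)
  rw [iteratedFDeriv_tsum_apply (N := ⊤) (fun j => (u j).smooth ⊤) (fun l _ => hu 0 l)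
    (fun l j x _ => (u j).norm_iteratedFDeriv_le_seminorm ℝ l x) (mod_cast le_top)]
  calc ‖x‖ ^ k * ‖∑' j, iteratedFDeriv ℝ l (u j) x‖
      ≤ ‖x‖ ^ k * ∑' j, ‖iteratedFDeriv ℝ l (u j) x‖ := by
        gcongr; exact norm_tsum_le_tsum_norm hnorm
    _ = ∑' j, ‖x‖ ^ k * ‖iteratedFDeriv ℝ l (u j) x‖ := tsum_mul_left.symm
    _ ≤ _ := (hnorm.mul_left _).tsum_le_tsum (fun j => (u j).le_seminorm ℝ k l x) (hu k l)

/-- The pointwise sum of a family of Schwartz functions all of whose seminorms are summable. -/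
def schwartzTsum (u : ι → 𝓢(E, F))
    (hu : ∀ k l : ℕ, Summable fun j => SchwartzMap.seminorm ℝ k l (u j)) : 𝓢(E, F) where
  toFun y := ∑' j, u j y
  smooth' := contDiff_tsum (N := ⊤) (fun j => (u j).smooth ⊤) (fun l _ => hu 0 l)
    fun l j x _ => (u j).norm_iteratedFDeriv_le_seminorm ℝ l x
  decay' k l := ⟨_, norm_pow_mul_iteratedFDeriv_tsum_le hu k l⟩

theorem seminorm_schwartzTsum_le
    (hu : ∀ k l : ℕ, Summable fun j => SchwartzMap.seminorm ℝ k l (u j)) (k l : ℕ) :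
    SchwartzMap.seminorm ℝ k l (schwartzTsum u hu) ≤ ∑' j, SchwartzMap.seminorm ℝ k l (u j) :=
  SchwartzMap.seminorm_le_bound ℝ k l _ (tsum_nonneg fun _ => apply_nonneg _ _)
    (norm_pow_mul_iteratedFDeriv_tsum_le hu k l)

theorem schwartzTsum_sub_sum
    (hu : ∀ k l : ℕ, Summable fun j => SchwartzMap.seminorm ℝ k l (u j)) (t : Finset ι) :
    schwartzTsum u hu - ∑ j ∈ t, u j =
      schwartzTsum (fun j : {j // j ∉ t} => u j) fun k l => (hu k l).subtype _ := by
  ext y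
  have hsummable : Summable fun j => u j y :=
    .of_norm_bounded (hu 0 0) fun j => (u j).norm_le_seminorm ℝ y
  have hsplit : ∑' j, u j y = ∑ j ∈ t, u j y + ∑' j : {j // j ∉ t}, u j y :=
    (hsummable.sum_add_tsum_subtype_compl t).symm
  rw [sub_apply, sum_apply]
  exact sub_eq_of_eq_add' hsplit

theorem hasSum_schwartzTsum
    (hu : ∀ k l : ℕ, Summable fun j => SchwartzMap.seminorm ℝ k l (u j)) :
    HasSum u (schwartzTsum u hu) := by
  refine ((schwartz_withSeminorms ℝ E F).tendsto_nhds _ _).2 fun ⟨k, l⟩ ε hε => ?_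
  have htail := tendsto_tsum_compl_atTop_zero fun j => SchwartzMap.seminorm ℝ k l (u j)
  filter_upwards [htail.eventually_lt_const hε] with t ht
  rw [map_sub_rev, schwartzTsum_sub_sum]
  exact (seminorm_schwartzTsum_le _ k l).trans_lt ht

theorem exists_clm_hasSum_of_seminorm_le_geometric {G H : Type*} [NormedAddCommGroup G]
    [NormedSpace ℝ G] [NormedAddCommGroup H] [NormedSpace ℝ H] {A : ℕ → 𝓢(G, H) →ₗ[ℝ] 𝓢(E, F)}
    (hA : ∀ k l : ℕ, ∃ (N M : ℕ) (C : ℝ), ∀ j η,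
      SchwartzMap.seminorm ℝ k l (A j η) ≤ C * (1 / 2) ^ j * supSeminorm N M η) :
    ∃ T : 𝓢(G, H) →L[ℝ] 𝓢(E, F), ∀ η, HasSum (fun j => A j η) (T η) := by
  have hsummable : ∀ η k l, Summable fun j => SchwartzMap.seminorm ℝ k l (A j η) := by
    intro η k l
    obtain ⟨N, M, C, hC⟩ := hA k l
    exact .of_nonneg_of_le (fun _ => apply_nonneg _ _) (fun j => hC j η)
      ((summable_geometric_two.mul_left C).mul_right _)
  have hsum := fun η => hasSum_schwartzTsum (hsummable η)
  let T : 𝓢(G, H) →ₗ[ℝ] 𝓢(E, F) :=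
    { toFun := fun η => schwartzTsum (fun j => A j η) (hsummable η)
      map_add' := fun η ζ => (hsum (η + ζ)).unique (by simpa using (hsum η).add (hsum ζ))
      map_smul' := fun c η => (hsum (c • η)).unique (by simpa using (hsum η).const_smul c) }
  refine ⟨⟨T, ?_⟩, hsum⟩
  refine (schwartz_withSeminorms ℝ G H).continuous_of_isBounded (schwartz_withSeminorms ℝ E F) T
    (Seminorm.IsBounded.of_real fun ⟨k, l⟩ => ?_)
  obtain ⟨N, M, C, hC⟩ := hA k l
  refine ⟨Finset.Iic (N, M), C * 2, fun η => ?_⟩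
  calc SchwartzMap.seminorm ℝ k l (T η) ≤ ∑' j, SchwartzMap.seminorm ℝ k l (A j η) :=
        seminorm_schwartzTsum_le (hsummable η) k l
    _ ≤ ∑' j : ℕ, C * (1 / 2) ^ j * supSeminorm N M η :=
        (hsummable η k l).tsum_le_tsum (fun j => hC j η)
          ((summable_geometric_two.mul_left C).mul_right _)
    _ = C * 2 * supSeminorm N M η := by rw [tsum_mul_right, tsum_mul_left, tsum_geometric_two]

end Series

section Dilation

variable {E F : Type*} [NormedAddCommGroup E] [NormedSpace ℝ E]
  [NormedAddCommGroup F] [NormedSpace ℝ F]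

theorem seminorm_compCLMOfContinuousLinearEquiv_le (e : E ≃L[ℝ] E) (k l : ℕ) (κ : 𝓢(E, F)) :
    SchwartzMap.seminorm ℝ k l (SchwartzMap.compCLMOfContinuousLinearEquiv ℝ e κ) ≤
      ‖(e.symm : E →L[ℝ] E)‖ ^ k * ‖(e : E →L[ℝ] E)‖ ^ l * SchwartzMap.seminorm ℝ k l κ := by
  refine SchwartzMap.seminorm_le_bound ℝ k l _ (by positivity) fun x => ?_
  have hderiv : iteratedFDeriv ℝ l (SchwartzMap.compCLMOfContinuousLinearEquiv ℝ e κ) x =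
      (iteratedFDeriv ℝ l κ (e x)).compContinuousLinearMap fun _ => (e : E →L[ℝ] E) :=
    (e : E →L[ℝ] E).iteratedFDeriv_comp_right (κ.smooth ⊤) x (mod_cast le_top)
  have hx : ‖x‖ ≤ ‖(e.symm : E →L[ℝ] E)‖ * ‖e x‖ := by
    simpa using (e.symm : E →L[ℝ] E).le_opNorm (e x)
  have hnorm := (iteratedFDeriv ℝ l κ (e x)).norm_compContinuousLinearMap_le
    fun _ => (e : E →L[ℝ] E)
  rw [Finset.prod_const, Finset.card_univ, Fintype.card_fin] at hnorm
  rw [hderiv]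
  calc _ ≤ (‖(e.symm : E →L[ℝ] E)‖ * ‖e x‖) ^ k *
        (‖iteratedFDeriv ℝ l κ (e x)‖ * ‖(e : E →L[ℝ] E)‖ ^ l) := by gcongr
    _ = ‖(e.symm : E →L[ℝ] E)‖ ^ k * ‖(e : E →L[ℝ] E)‖ ^ l *
        (‖e x‖ ^ k * ‖iteratedFDeriv ℝ l κ (e x)‖) := by ring
    _ ≤ _ := by gcongr; exact κ.le_seminorm ℝ k l (e x)

theorem supSeminorm_compCLMOfContinuousLinearEquiv_le {e : E ≃L[ℝ] E} {R : ℝ} (hR : 1 ≤ R)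
    (he : ‖(e : E →L[ℝ] E)‖ ≤ R) (he' : ‖(e.symm : E →L[ℝ] E)‖ ≤ 1) (k l : ℕ) (κ : 𝓢(E, F)) :
    supSeminorm k l (SchwartzMap.compCLMOfContinuousLinearEquiv ℝ e κ) ≤
      R ^ l * supSeminorm k l κ := by
  refine Seminorm.finset_sup_apply_le (by positivity) fun ⟨k', l'⟩ hi => ?_
  calc SchwartzMap.seminorm ℝ k' l' (SchwartzMap.compCLMOfContinuousLinearEquiv ℝ e κ)
      ≤ ‖(e.symm : E →L[ℝ] E)‖ ^ k' * ‖(e : E →L[ℝ] E)‖ ^ l' * SchwartzMap.seminorm ℝ k' l' κ :=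
        seminorm_compCLMOfContinuousLinearEquiv_le e k' l' κ
    _ ≤ 1 * R ^ l * supSeminorm k l κ := by
        gcongr
        · exact pow_le_one₀ (norm_nonneg _) he'
        · exact (pow_le_pow_left₀ (norm_nonneg _) he l').trans
            (pow_le_pow_right₀ hR (Finset.mem_Iic.1 hi).2)
        · exact Seminorm.le_finset_sup_apply (p := schwartzSeminormFamily ℝ E F) hi
    _ = _ := by rw [one_mul]

theorem norm_coe_pow_le (D : E ≃L[ℝ] E) (j : ℕ) :
    ‖((D ^ j : E ≃L[ℝ] E) : E →L[ℝ] E)‖ ≤ ‖(D : E →L[ℝ] E)‖ ^ j := by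
  induction j with
  | zero => simpa using! ContinuousLinearMap.norm_id_le (𝕜 := ℝ) (E := E)
  | succ j ih =>
    rw [pow_succ, pow_succ]
    calc ‖((D ^ j : E ≃L[ℝ] E) : E →L[ℝ] E) ∘L (D : E →L[ℝ] E)‖
        ≤ ‖((D ^ j : E ≃L[ℝ] E) : E →L[ℝ] E)‖ * ‖(D : E →L[ℝ] E)‖ :=
          ContinuousLinearMap.opNorm_comp_le _ _
      _ ≤ ‖(D : E →L[ℝ] E)‖ ^ j * ‖(D : E →L[ℝ] E)‖ := by gcongr

theorem norm_coe_pow_symm_le (D : E ≃L[ℝ] E) (j : ℕ) :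
    ‖((D ^ j : E ≃L[ℝ] E).symm : E →L[ℝ] E)‖ ≤ ‖(D.symm : E →L[ℝ] E)‖ ^ j := by
  have hinv : (D ^ j).symm = D.symm ^ j := (inv_pow D j).symm
  rw [hinv]
  exact norm_coe_pow_le D.symm j

theorem det_coe_pow (D : E ≃L[ℝ] E) (j : ℕ) :
    LinearMap.det ((D ^ j : E ≃L[ℝ] E) : E →ₗ[ℝ] E) = LinearMap.det (D : E →ₗ[ℝ] E) ^ j := by
  induction j with
  | zero => rw [pow_zero, pow_zero]; exact LinearMap.det_id
  | succ j ih =>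
    rw [pow_succ, pow_succ, ← ih]
    exact LinearMap.det_comp _ _

/-- The reflection `κ̌ : x ↦ κ(-x)`. -/
def reflection (κ : 𝓢(E, F)) : 𝓢(E, F) :=
  SchwartzMap.compCLMOfContinuousLinearEquiv ℝ (ContinuousLinearEquiv.neg ℝ) κ

theorem reflection_apply (κ : 𝓢(E, F)) (x : E) : reflection κ x = κ (-x) := rfl

theorem supSeminorm_reflection_le (k l : ℕ) (κ : 𝓢(E, F)) :
    supSeminorm k l (reflection κ) ≤ supSeminorm k l κ := by
  have hneg : ‖((ContinuousLinearEquiv.neg ℝ : E ≃L[ℝ] E) : E →L[ℝ] E)‖ ≤ 1 :=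
    ContinuousLinearMap.opNorm_le_bound _ zero_le_one fun x => by simp
  simpa using! supSeminorm_compCLMOfContinuousLinearEquiv_le le_rfl hneg hneg k l κ

/-- The `L¹`-normalised dilations `θ_j(x) = |det D| ^ j * θ(D ^ j x)` for `j ≥ 1`, together with the
given function `θ₀` for `j = 0`. -/
def dilation (D : E ≃L[ℝ] E) (θ₀ θ : 𝓢(E, F)) (j : ℕ) : 𝓢(E, F) :=
  |LinearMap.det (D : E →ₗ[ℝ] E)| ^ j •
    SchwartzMap.compCLMOfContinuousLinearEquiv ℝ (D ^ j) (if j = 0 then θ₀ else θ)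

theorem supSeminorm_dilation_le {D : E ≃L[ℝ] E} (hD : ‖(D.symm : E →L[ℝ] E)‖ ≤ 1) {R : ℝ}
    (hR : 1 ≤ R) (hDR : ‖(D : E →L[ℝ] E)‖ ≤ R) (k l : ℕ) (θ₀ θ : 𝓢(E, F)) (j : ℕ) :
    supSeminorm k l (dilation D θ₀ θ j) ≤
      (|LinearMap.det (D : E →ₗ[ℝ] E)| * R ^ l) ^ j * (supSeminorm k l θ₀ + supSeminorm k l θ) := by
  have hcomp : ∀ κ : 𝓢(E, F), supSeminorm k l
      (SchwartzMap.compCLMOfContinuousLinearEquiv ℝ (D ^ j) κ) ≤ (R ^ j) ^ l * supSeminorm k l κ :=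
    supSeminorm_compCLMOfContinuousLinearEquiv_le (one_le_pow₀ hR)
      ((norm_coe_pow_le D j).trans (by gcongr))
      ((norm_coe_pow_symm_le D j).trans (pow_le_one₀ (norm_nonneg _) hD)) k l
  have hprofile : supSeminorm k l (if j = 0 then θ₀ else θ) ≤
      supSeminorm k l θ₀ + supSeminorm k l θ := by
    split_ifs
    exacts [le_add_of_nonneg_right (apply_nonneg _ _), le_add_of_nonneg_left (apply_nonneg _ _)]
  rw [dilation, map_smul_eq_mul, Real.norm_of_nonneg (by positivity)]
  calc _ ≤ |LinearMap.det (D : E →ₗ[ℝ] E)| ^ j *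
        ((R ^ j) ^ l * (supSeminorm k l θ₀ + supSeminorm k l θ)) := by
        gcongr
        exact (hcomp _).trans (by gcongr)
    _ = _ := by ring

end Dilation

section Correlation

variable {E : Type*} [NormedAddCommGroup E] [NormedSpace ℝ E] [FiniteDimensional ℝ E]
  [MeasurableSpace E] [BorelSpace E] {μ : Measure E} [μ.IsAddHaarMeasure]

theorem integral_eq_abs_det_smul_integral_comp {F : Type*} [NormedAddCommGroup F]
    [NormedSpace ℝ F] (e : E ≃L[ℝ] E) (g : E → F) :
    ∫ w, g w ∂μ = |LinearMap.det (e : E →ₗ[ℝ] E)| • ∫ z, g (e z) ∂μ := by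
  have hdet : LinearMap.det (e : E →ₗ[ℝ] E) ≠ 0 := e.toLinearEquiv.isUnit_det'.ne_zero
  have hmap : μ.map e = ENNReal.ofReal |(LinearMap.det (e : E →ₗ[ℝ] E))⁻¹| • μ :=
    Measure.map_linearMap_addHaar_eq_smul_addHaar μ hdet
  have hcomp : ∫ w, g w ∂μ.map e = ∫ z, g (e z) ∂μ :=
    e.toHomeomorph.measurableEmbedding.integral_map g
  rw [← hcomp, hmap, integral_smul_measure, ENNReal.toReal_ofReal (abs_nonneg _), abs_inv,
    smul_inv_smul₀ (abs_ne_zero.2 hdet)]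

theorem densityConv_reflection_dilation_apply (D : E ≃L[ℝ] E) (θ₀ θ η : 𝓢(E, ℝ)) (j : ℕ) (x : E) :
    densityConv μ η (reflection (dilation D θ₀ θ j)) x =
      ∫ w, (if j = 0 then θ₀ else θ) w * η (x + (D ^ j).symm w) ∂μ := by
  rw [integral_eq_abs_det_smul_integral_comp (D ^ j), densityConv_apply, det_coe_pow,
    ← integral_smul, ← integral_add_left_eq_self _ x]
  congr with z
  simp only [reflection_apply, dilation, smul_apply,
    SchwartzMap.compCLMOfContinuousLinearEquiv_apply, Function.comp_apply,
    ContinuousLinearEquiv.symm_apply_apply, smul_eq_mul, neg_sub, add_sub_cancel_left, abs_pow]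
  ring

theorem exists_one_add_pow_mul_densityConv_le {D : E ≃L[ℝ] E} (hD : ‖(D.symm : E →L[ℝ] E)‖ ≤ 1)
    {M : ℕ} {θ : 𝓢(E, ℝ)} (hθ : HasVanishingMomentsBelow μ M θ) (θ₀ : 𝓢(E, ℝ)) (N : ℕ) :
    ∃ C : ℝ, 0 ≤ C ∧ ∀ (j : ℕ) (η : 𝓢(E, ℝ)) (x : E),
      (1 + ‖x‖) ^ N * ‖densityConv μ η (reflection (dilation D θ₀ θ j)) x‖ ≤
        C * (‖(D.symm : E →L[ℝ] E)‖ ^ M) ^ j * supSeminorm N M η := by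
  set I₀ := ∫ w, (1 + ‖w‖) ^ N * ‖θ₀ w‖ ∂μ
  set I := ∫ w, (1 + ‖w‖) ^ (N + M) * ‖θ w‖ ∂μ
  have hI₀ : 0 ≤ I₀ := integral_nonneg fun w => by positivity
  have hI : 0 ≤ I := integral_nonneg fun w => by positivity
  refine ⟨(I₀ + I) * 2 ^ N, by positivity, fun j η x => ?_⟩
  have hL := norm_coe_pow_symm_le D j
  have hr := pow_le_one₀ (n := j) (norm_nonneg _) hD
  rw [densityConv_reflection_dilation_apply]
  rcases eq_or_ne j 0 with rfl | hj
  · have hθ₀ : HasVanishingMomentsBelow μ 0 θ₀ := fun m hm => absurd hm m.not_lt_zero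
    have hmono : supSeminorm N 0 η ≤ supSeminorm N M η := supSeminorm_mono le_rfl M.zero_le η
    calc _ ≤ (‖(D.symm : E →L[ℝ] E)‖ ^ 0) ^ 0 * I₀ * (2 ^ N * supSeminorm N 0 η) :=
          one_add_pow_mul_integral_comp_le hθ₀ N η hr hL x
      _ ≤ 1 * (I₀ + I) * (2 ^ N * supSeminorm N M η) := by
          gcongr
          · simp
          · linarith
      _ = _ := by ring
  · rw [if_neg hj]
    calc _ ≤ (‖(D.symm : E →L[ℝ] E)‖ ^ j) ^ M * I * (2 ^ N * supSeminorm N M η) :=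
          one_add_pow_mul_integral_comp_le hθ N η hr hL x
      _ ≤ (‖(D.symm : E →L[ℝ] E)‖ ^ j) ^ M * (I₀ + I) * (2 ^ N * supSeminorm N M η) := by
          gcongr; linarith
      _ = _ := by ring

end Correlation

section ExtensionSeries

theorem exists_pow_mul_le_half {r B : ℝ} (hr : r < 1) (hB : 0 ≤ B) :
    ∃ M : ℕ, r ^ M * B ≤ 1 / 2 := by
  obtain ⟨M, hM⟩ := exists_pow_lt_of_lt_one (show 0 < 1 / (2 * (B + 1)) by positivity) hr
  refine ⟨M, ?_⟩
  calc r ^ M * B ≤ 1 / (2 * (B + 1)) * (B + 1) := by gcongr; linarith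
    _ = 1 / 2 := by field_simp

variable {E : Type*} [NormedAddCommGroup E] [NormedSpace ℝ E] [FiniteDimensional ℝ E]
  [MeasurableSpace E] [BorelSpace E] {μ ν : Measure E} [μ.IsAddHaarMeasure]
  [ν.HasTemperateGrowth] {D : E ≃L[ℝ] E}

variable (μ ν D) in
/-- The `j`-th term `η ↦ φ̌_j * (ν (ψ̌_j * η))` of the adjoint extension series, where `φ_j`, `ψ_j`
are the dilations of `φ₀`, `φ` and `ψ₀`, `ψ`. The paper's truncation to the half-space is the case
where `ν` is the restriction of `μ` to it. -/
def extensionTerm (φ₀ φ ψ₀ ψ : 𝓢(E, ℝ)) (j : ℕ) : 𝓢(E, ℝ) →ₗ[ℝ] 𝓢(E, ℝ) :=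
  densityConvₗ ν (reflection (dilation D φ₀ φ j)) ∘ₗ
    densityConvₗ μ (reflection (dilation D ψ₀ ψ j))

theorem exists_seminorm_extensionTerm_le (hD : ‖(D.symm : E →L[ℝ] E)‖ < 1) {ψ : 𝓢(E, ℝ)}
    (hψ : ∀ M, HasVanishingMomentsBelow μ M ψ) (φ₀ φ ψ₀ : 𝓢(E, ℝ)) (k l : ℕ) :
    ∃ (N M : ℕ) (C : ℝ), ∀ j η,
      SchwartzMap.seminorm ℝ k l (extensionTerm μ ν D φ₀ φ ψ₀ ψ j η) ≤
        C * (1 / 2) ^ j * supSeminorm N M η := by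
  set r := ‖(D.symm : E →L[ℝ] E)‖
  set B := |LinearMap.det (D : E →ₗ[ℝ] E)| * max 1 ‖(D : E →L[ℝ] E)‖ ^ l
  set J := ∫ x : E, (1 + ‖x‖) ^ (-(ν.integrablePower : ℝ)) ∂ν
  set S := supSeminorm k l φ₀ + supSeminorm k l φ
  obtain ⟨M, hM⟩ := exists_pow_mul_le_half hD (show 0 ≤ B by positivity)
  obtain ⟨C, hC₀, hC⟩ :=
    exists_one_add_pow_mul_densityConv_le hD.le (hψ M) ψ₀ (k + ν.integrablePower)
  refine ⟨k + ν.integrablePower, M, J * C * (2 ^ k * S), fun j η => ?_⟩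
  set Q := supSeminorm (k + ν.integrablePower) M η
  calc SchwartzMap.seminorm ℝ k l (extensionTerm μ ν D φ₀ φ ψ₀ ψ j η)
      ≤ (∫ x, (1 + ‖x‖) ^ k * ‖densityConv μ η (reflection (dilation D ψ₀ ψ j)) x‖ ∂ν) *
          (2 ^ k * supSeminorm k l (reflection (dilation D φ₀ φ j))) :=
        seminorm_densityConv_le _ _ k l
    _ ≤ (J * (C * (r ^ M) ^ j * Q)) * (2 ^ k * (B ^ j * S)) := by
        gcongr
        · exact integral_one_add_pow_mul_norm_le (hC j η)
        · exact (supSeminorm_reflection_le k l _).trans (supSeminorm_dilation_le hD.le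
            (le_max_left _ _) (le_max_right _ _) k l φ₀ φ j)
    _ = J * C * (2 ^ k * S) * (r ^ M * B) ^ j * Q := by rw [mul_pow]; ring
    _ ≤ _ := by gcongr

theorem exists_clm_hasSum_extensionTerm (hD : ‖(D.symm : E →L[ℝ] E)‖ < 1) {ψ : 𝓢(E, ℝ)}
    (hψ : ∀ M, HasVanishingMomentsBelow μ M ψ) (φ₀ φ ψ₀ : 𝓢(E, ℝ)) :
    ∃ T : 𝓢(E, ℝ) →L[ℝ] 𝓢(E, ℝ), ∀ η,
      HasSum (fun j => extensionTerm μ ν D φ₀ φ ψ₀ ψ j η) (T η) :=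
  exists_clm_hasSum_of_seminorm_le_geometric
    (exists_seminorm_extensionTerm_le hD hψ φ₀ φ ψ₀)

end ExtensionSeries

section Anisotropic

variable {d : ℕ} {a : Fin d → ℝ}

/-- The anisotropic scaling `x ↦ 2^a x` of `ℝ^d`, as an automorphism. -/
def anisotropicScaling (a : Fin d → ℝ) : (Fin d → ℝ) ≃L[ℝ] (Fin d → ℝ) :=
  .piCongrRight fun i => .unitsEquivAut ℝ (.mk0 ((2 : ℝ) ^ a i) (by positivity))

theorem anisotropicScaling_pow_apply (a : Fin d → ℝ) (j : ℕ) (x : Fin d → ℝ) :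
    (anisotropicScaling a ^ j) x = fun i => (2 : ℝ) ^ (j * a i) * x i := by
  induction j generalizing x with
  | zero =>
    have hone : (anisotropicScaling a ^ 0) x = x := rfl
    rw [hone]
    simp
  | succ j ih =>
    have hstep : (anisotropicScaling a ^ (j + 1)) x =
        (anisotropicScaling a ^ j) (anisotropicScaling a x) := rfl
    have hx : ∀ i, anisotropicScaling a x i = x i * 2 ^ a i := fun _ => rfl
    rw [hstep, ih]
    ext i
    rw [hx, Nat.cast_succ, add_mul, one_mul, Real.rpow_add two_pos]
    ring

theorem det_anisotropicScaling (a : Fin d → ℝ) :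
    LinearMap.det (anisotropicScaling a : (Fin d → ℝ) →ₗ[ℝ] (Fin d → ℝ)) = 2 ^ ∑ i, a i := by
  have hpi := LinearMap.det_pi fun i => LinearMap.mulRight ℝ ((2 : ℝ) ^ a i)
  simp only [LinearMap.det_ring, LinearMap.mulRight_apply, one_mul] at hpi
  rw [Real.rpow_sum_of_pos two_pos]
  exact hpi

theorem norm_anisotropicScaling_symm_lt_one (ha : ∀ i, 0 < a i) :
    ‖((anisotropicScaling a).symm : (Fin d → ℝ) →L[ℝ] (Fin d → ℝ))‖ < 1 := by
  have hfactor : ‖fun i => ((2 : ℝ) ^ a i)⁻¹‖ < 1 :=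
    (pi_norm_lt_iff one_pos).2 fun i => by
      rw [Real.norm_of_nonneg (by positivity)]
      exact inv_lt_one_of_one_lt₀ (Real.one_lt_rpow one_lt_two (ha i))
  refine (ContinuousLinearMap.opNorm_le_bound _ (norm_nonneg _) fun x => ?_).trans_lt hfactor
  refine (pi_norm_le_iff_of_nonneg (by positivity)).2 fun i => ?_
  have hx : (anisotropicScaling a).symm x i = ((2 : ℝ) ^ a i)⁻¹ * x i := mul_comm _ _
  calc ‖(anisotropicScaling a).symm x i‖ = ‖((2 : ℝ) ^ a i)⁻¹‖ * ‖x i‖ := by rw [hx, norm_mul]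
    _ ≤ ‖fun i => ((2 : ℝ) ^ a i)⁻¹‖ * ‖x‖ := by
        gcongr
        · exact norm_le_pi_norm (fun i => ((2 : ℝ) ^ a i)⁻¹) i
        · exact norm_le_pi_norm x i

theorem dilation_anisotropicScaling_apply (a : Fin d → ℝ) (θ₀ θ : 𝓢(Fin d → ℝ, ℝ)) (j : ℕ)
    (x : Fin d → ℝ) : dilation (anisotropicScaling a) θ₀ θ j x = anisoDil a θ₀ θ j x := by
  have hdet : |LinearMap.det (anisotropicScaling a : (Fin d → ℝ) →ₗ[ℝ] (Fin d → ℝ))| ^ j =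
      (2 : ℝ) ^ (j * ∑ i, a i) := by
    rw [det_anisotropicScaling, abs_of_nonneg (by positivity), mul_comm,
      Real.rpow_mul_natCast two_pos.le]
  simp only [dilation, anisoDil, smul_apply, smul_eq_mul, hdet,
    SchwartzMap.compCLMOfContinuousLinearEquiv_apply, Function.comp_apply,
    anisotropicScaling_pow_apply]
  rcases eq_or_ne j 0 with rfl | hj
  · simp
  · simp only [hj, if_false]

theorem anisoDil_eq_zero_of_nonneg {θ₀ θ : (Fin d → ℝ) → ℝ} {i : Fin d}
    (hθ₀ : tsupport θ₀ ⊆ {x | x i < 0}) (hθ : tsupport θ ⊆ {x | x i < 0}) (j : ℕ)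
    {x : Fin d → ℝ} (hx : 0 ≤ x i) : anisoDil a θ₀ θ j x = 0 := by
  have hvanish : ∀ {g : (Fin d → ℝ) → ℝ} {y : Fin d → ℝ}, tsupport g ⊆ {x | x i < 0} →
      0 ≤ y i → g y = 0 := fun hg hy =>
    image_eq_zero_of_notMem_tsupport fun hmem => (hg hmem).not_ge hy
  unfold anisoDil
  split_ifs
  · exact hvanish hθ₀ hx
  · rw [hvanish hθ (mul_nonneg (by positivity) hx), mul_zero]

theorem densityConv_anisoDil_apply (ν : Measure (Fin d → ℝ)) [ν.HasTemperateGrowth]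
    (h θ₀ θ : 𝓢(Fin d → ℝ, ℝ)) (j : ℕ) (y : Fin d → ℝ) :
    densityConv ν h (reflection (dilation (anisotropicScaling a) θ₀ θ j)) y =
      ∫ x, h x * anisoDil a θ₀ θ j (x - y) ∂ν := by
  simp only [densityConv_apply, reflection_apply, neg_sub, dilation_anisotropicScaling_apply,
    smul_eq_mul]

theorem extensionTerm_anisoDil_apply (ν : Measure (Fin d → ℝ)) [ν.HasTemperateGrowth]
    (φ₀ φ ψ₀ ψ η : 𝓢(Fin d → ℝ, ℝ)) (j : ℕ) (y : Fin d → ℝ) :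
    extensionTerm volume ν (anisotropicScaling a) φ₀ φ ψ₀ ψ j η y =
      ∫ x, (∫ z, anisoDil a ψ₀ ψ j (z - x) * η z) * anisoDil a φ₀ φ j (x - y) ∂ν := by
  simp only [extensionTerm, LinearMap.comp_apply, densityConvₗ_apply,
    densityConv_anisoDil_apply, mul_comm (η _)]

theorem map_extensionTerm_anisoDil (ν : Measure (Fin d → ℝ)) [ν.HasTemperateGrowth]
    {φ₀ φ : 𝓢(Fin d → ℝ, ℝ)} (ψ₀ ψ : 𝓢(Fin d → ℝ, ℝ)) {j : ℕ}
    {tr : (Fin d → ℝ) → 𝓢(Fin d → ℝ, ℝ)} (htr : ∀ x y, tr x y = anisoDil a φ₀ φ j (x - y))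
    (f : 𝓢(Fin d → ℝ, ℝ) →L[ℝ] ℝ) (η : 𝓢(Fin d → ℝ, ℝ)) :
    f (extensionTerm volume ν (anisotropicScaling a) φ₀ φ ψ₀ ψ j η) =
      ∫ x, f (tr x) * (∫ z, anisoDil a ψ₀ ψ j (z - x) * η z) ∂ν := by
  have htranslate : ∀ x, tr x =
      (reflection (dilation (anisotropicScaling a) φ₀ φ j)).compSubConstCLM ℝ x := fun x => by
    ext y
    simp [htr, reflection_apply, dilation_anisotropicScaling_apply]
  calc _ = ∫ x, densityConv volume η (reflection (dilation (anisotropicScaling a) ψ₀ ψ j)) x *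
        f ((reflection (dilation (anisotropicScaling a) φ₀ φ j)).compSubConstCLM ℝ x) ∂ν :=
        map_densityConv f _ _
    _ = _ := by
        simp only [densityConv_anisoDil_apply, htranslate, mul_comm (η _), mul_comm (f _)]

theorem extensionTerm_apply_eq_zero {φ₀ φ : 𝓢(Fin d → ℝ, ℝ)} {i : Fin d}
    (hφ₀ : tsupport φ₀ ⊆ {x | x i < 0}) (hφ : tsupport φ ⊆ {x | x i < 0})
    (ψ₀ ψ η : 𝓢(Fin d → ℝ, ℝ)) (j : ℕ) {y : Fin d → ℝ} (hy : y i < 0) :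
    extensionTerm volume (volume.restrict {x | 0 < x i}) (anisotropicScaling a) φ₀ φ ψ₀ ψ j η y =
      0 := by
  rw [extensionTerm_anisoDil_apply]
  refine setIntegral_eq_zero_of_forall_eq_zero fun x hx => ?_
  rw [anisoDil_eq_zero_of_nonneg hφ₀ hφ j (sub_nonneg.2 (hy.trans hx).le), mul_zero]

theorem tsupport_subset_of_hasSum_extensionTerm {φ₀ φ ψ₀ ψ η v : 𝓢(Fin d → ℝ, ℝ)} {i : Fin d}
    (hφ₀ : tsupport φ₀ ⊆ {x | x i < 0}) (hφ : tsupport φ ⊆ {x | x i < 0})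
    (hv : HasSum (fun j => extensionTerm volume (volume.restrict {x | 0 < x i})
      (anisotropicScaling a) φ₀ φ ψ₀ ψ j η) v) :
    tsupport v ⊆ {y | 0 ≤ y i} := by
  refine closure_minimal (fun y hy => ?_) (isClosed_le continuous_const (continuous_apply i))
  by_contra hneg
  have hsum := hasSum_schwartz_apply hv y
  simp only [extensionTerm_apply_eq_zero hφ₀ hφ ψ₀ ψ η _ (not_le.1 hneg)] at hsum
  exact hy (hsum.unique hasSum_zero)

end Anisotropic

end UniversalExtension

open UniversalExtension SchwartzMap in
theorem universal_extension_adjoint_general {d : ℕ} (i : Fin d) (a : Fin d → ℝ)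
    (ha : ∀ k, 0 < a k) (φ₀ φ ψ₀ ψ : 𝓢(Fin d → ℝ, ℝ))
    (hφ₀s : tsupport φ₀ ⊆ {x | x i < 0}) (hφs : tsupport φ ⊆ {x | x i < 0})
    (hψm : VanishingMoments ψ) :
    ∃ T : 𝓢(Fin d → ℝ, ℝ) →L[ℝ] 𝓢(Fin d → ℝ, ℝ),
      (∀ (η : 𝓢(Fin d → ℝ, ℝ)) (uu : ℕ → 𝓢(Fin d → ℝ, ℝ)),
        (∀ j y, uu j y = ∫ x in {x | 0 < x i},
          (∫ z, anisoDil a ψ₀ ψ j (z - x) * η z) * anisoDil a φ₀ φ j (x - y)) →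
        Tendsto (fun N => ∑ j ∈ Finset.range N, uu j) atTop (𝓝 (T η))) ∧
      (∀ η, tsupport (T η) ⊆ {y | 0 ≤ y i}) ∧
      (∀ (f : 𝓢(Fin d → ℝ, ℝ) →L[ℝ] ℝ) (tr : ℕ → (Fin d → ℝ) → 𝓢(Fin d → ℝ, ℝ)),
        (∀ j x y, tr j x y = anisoDil a φ₀ φ j (x - y)) →
        ∀ η : 𝓢(Fin d → ℝ, ℝ), (∑' j, ∫ x in {x | 0 < x i},
          f (tr j x) * (∫ z, anisoDil a ψ₀ ψ j (z - x) * η z)) = f (T η)) ∧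
      (∀ η, Continuous fun f : WeakDual ℝ 𝓢(Fin d → ℝ, ℝ) => f (T η)) ∧
      (∀ f g : 𝓢(Fin d → ℝ, ℝ) →L[ℝ] ℝ,
        (∀ θ : 𝓢(Fin d → ℝ, ℝ), tsupport θ ⊆ {x | 0 ≤ x i} → f θ = g θ) →
        ∀ η, f (T η) = g (T η)) := by
  obtain ⟨T, hT⟩ := exists_clm_hasSum_extensionTerm (ν := volume.restrict {x | 0 < x i})
    (norm_anisotropicScaling_symm_lt_one ha) (hasVanishingMomentsBelow_of_vanishingMoments hψm)
    φ₀ φ ψ₀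
  have hsupp := fun η => tsupport_subset_of_hasSum_extensionTerm hφ₀s hφs (hT η)
  refine ⟨T, fun η uu huu => ?_, hsupp, fun f tr htr η => ?_,
    fun η => WeakDual.eval_continuous (T η), fun f g hfg η => hfg (T η) (hsupp η)⟩
  · have huu_eq : uu = fun j => extensionTerm volume (volume.restrict {x | 0 < x i})
        (anisotropicScaling a) φ₀ φ ψ₀ ψ j η := by
      ext j y
      rw [huu, extensionTerm_anisoDil_apply]
    exact huu_eq ▸ (hT η).tendsto_sum_nat
  · rw [← ((hT η).mapL f).tsum_eq]
    exact tsum_congr fun j => (map_extensionTerm_anisoDil _ ψ₀ ψ (htr j) f η).symm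

/-- With `φ₀, φ, ψ₀, ψ ∈ 𝓢(ℝⁿ)` supported in `{xₙ < 0}` and `φ, ψ` having
vanishing moments of all orders, the series `Tη = Σ_j φ̌_j * (1_{ℝⁿ₊}·(ψ̌_j * η))` converges
in `𝓢(ℝⁿ)` and defines a continuous linear map `T : 𝓢(ℝⁿ) → 𝓢(ℝⁿ)`; each `Tη` is supported in
`{xₙ ≥ 0}`; the extension operator satisfies `⟨E_u(f), η⟩ = ⟨f, Tη⟩`; hence `E_u` is
weak*-continuous and `E_u(f) = E_u(g)` whenever `f, g` agree on Schwartz functions supported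
in `{xₙ ≥ 0}`. -/
theorem universal_extension_adjoint (n : ℕ) (a : Fin (n+1) → ℝ)
    (ha : ∀ i, 1 ≤ a i)
    (φ₀ φ ψ₀ ψ : SchwartzMap (Fin (n+1) → ℝ) ℝ)
    (hφ₀s : tsupport ⇑φ₀ ⊆ {x : Fin (n+1) → ℝ | x (Fin.last n) < 0})
    (hφs : tsupport ⇑φ ⊆ {x : Fin (n+1) → ℝ | x (Fin.last n) < 0})
    (hψ₀s : tsupport ⇑ψ₀ ⊆ {x : Fin (n+1) → ℝ | x (Fin.last n) < 0})
    (hψs : tsupport ⇑ψ ⊆ {x : Fin (n+1) → ℝ | x (Fin.last n) < 0})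
    (hφm : VanishingMoments ⇑φ) (hψm : VanishingMoments ⇑ψ) :
    ∃ T : SchwartzMap (Fin (n+1) → ℝ) ℝ →L[ℝ] SchwartzMap (Fin (n+1) → ℝ) ℝ,
      -- the series `Σ_j φ̌_j * (1_{ℝⁿ₊}·(ψ̌_j * η))` converges to `Tη` in `𝓢(ℝⁿ)`
      (∀ (η : SchwartzMap (Fin (n+1) → ℝ) ℝ)
         (uu : ℕ → SchwartzMap (Fin (n+1) → ℝ) ℝ),
        (∀ (j : ℕ) (y : Fin (n+1) → ℝ),
          uu j y = ∫ x in {x : Fin (n+1) → ℝ | 0 < x (Fin.last n)},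
            (∫ z : Fin (n+1) → ℝ, anisoDil a ⇑ψ₀ ⇑ψ j (z - x) * η z)
              * anisoDil a ⇑φ₀ ⇑φ j (x - y)) →
        Tendsto (fun N => ∑ j ∈ Finset.range N, uu j) atTop (nhds (T η))) ∧
      -- every `Tη` is supported in the closed half-space `{xₙ ≥ 0}`
      (∀ η : SchwartzMap (Fin (n+1) → ℝ) ℝ,
        tsupport ⇑(T η) ⊆ {y : Fin (n+1) → ℝ | 0 ≤ y (Fin.last n)}) ∧
      -- `⟨E_u(f), η⟩ = ⟨f, Tη⟩`, where `⟨E_u(f), η⟩ = Σ_j ⟨e₊(φ_j*f), ψ̌_j*η⟩`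
      (∀ (f : SchwartzMap (Fin (n+1) → ℝ) ℝ →L[ℝ] ℝ)
         (tr : ℕ → (Fin (n+1) → ℝ) → SchwartzMap (Fin (n+1) → ℝ) ℝ),
        (∀ (j : ℕ) (x y : Fin (n+1) → ℝ), tr j x y = anisoDil a ⇑φ₀ ⇑φ j (x - y)) →
        ∀ η : SchwartzMap (Fin (n+1) → ℝ) ℝ,
          (∑' j : ℕ, ∫ x in {x : Fin (n+1) → ℝ | 0 < x (Fin.last n)},
            f (tr j x) * (∫ z : Fin (n+1) → ℝ, anisoDil a ⇑ψ₀ ⇑ψ j (z - x) * η z))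
            = f (T η)) ∧
      -- weak*-continuity of `E_u : f ↦ f ∘ T`
      (∀ η : SchwartzMap (Fin (n+1) → ℝ) ℝ,
        Continuous fun f : WeakDual ℝ (SchwartzMap (Fin (n+1) → ℝ) ℝ) => f (T η)) ∧
      -- `E_u(f) = E_u(g)` when `f, g` agree on Schwartz functions supported in `{xₙ ≥ 0}`
      (∀ f g : SchwartzMap (Fin (n+1) → ℝ) ℝ →L[ℝ] ℝ,
        (∀ θ : SchwartzMap (Fin (n+1) → ℝ) ℝ,
          tsupport ⇑θ ⊆ {x : Fin (n+1) → ℝ | 0 ≤ x (Fin.last n)} → f θ = g θ) →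
        ∀ η : SchwartzMap (Fin (n+1) → ℝ) ℝ, f (T η) = g (T η)) := by
  exact universal_extension_adjoint_general (Fin.last n) a
    (fun i => zero_lt_one.trans_le (ha i)) φ₀ φ ψ₀ ψ hφ₀s hφs hψm

end
end

section
/- Let a = (a₁,…,aₙ) ∈ [1,∞)ⁿ and let φ₀, φ, ψ₀, ψ ∈ 𝓢(ℝⁿ) be supported in {x ∈ ℝⁿ : xₙ < 0}, with φ and ψ having vanishing moments of all orders, and assume the Calderón reproducing formula u = Σ_{j=0}^∞ ψ_j * (φ_j * u) holds in the weak* topology of 𝓢'(ℝⁿ) for every u ∈ 𝓢'(ℝⁿ). Then the operator E_u(f) = Σ_{j=0}^∞ ψ_j * e₊(φ_j * f) is a left-invertible extension from the half-space: for every f ∈ 𝓢'(ℝⁿ) and every smooth compactly supported test function χ with supp χ ⊆ ℝⁿ₊ = {x : xₙ > 0}, one has ⟨E_u(f), χ⟩ = ⟨f, χ⟩. -/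
open MeasureTheory Filter Topology

noncomputable section

/-!
Fix `χ` and move both dilated kernels onto it: the `j`-th term of the Calderón formula is `f`
applied to the Schwartz function `∫ (χ * ψ̌ⱼ)(x) φⱼ(x - ·) dx`. A functional bounded by finitely
many Schwartz seminorms commutes with this integral, so the term equals
`∫ (χ * ψ̌ⱼ)(x) (φⱼ * f)(x) dx`. Since `χ` lives on `xₙ > 0` and `ψⱼ` on `xₙ < 0`, the function
`χ * ψ̌ⱼ` is supported in `supp χ - supp ψⱼ ⊆ {xₙ > 0}`. Cutting `φⱼ * f` off at the half-space
therefore leaves every term of the Calderón series unchanged.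
-/

open SchwartzMap
open scoped SchwartzMap BoundedContinuousFunction ContDiff Pointwise

set_option maxSynthPendingDepth 3

section DominatedFunctional

variable {𝕜 V B : Type*} [RCLike 𝕜] [AddCommGroup V] [Module 𝕜 V]
  [NormedAddCommGroup B] [NormedSpace 𝕜 B]

theorem exists_strongDual_comp_eq_of_norm_le (J : V →ₗ[𝕜] B) (f : V →ₗ[𝕜] 𝕜) {C : ℝ}
    (h : ∀ v, ‖f v‖ ≤ C * ‖J v‖) : ∃ g : StrongDual 𝕜 B, ∀ v, g (J v) = f v := by
  let f₀ : StrongDual 𝕜 (LinearMap.range J) := f.extendOfNorm J.rangeRestrict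
  have hf₀ (v : V) : f₀ (J.rangeRestrict v) = f v :=
    f.extendOfNorm_eq J.surjective_rangeRestrict.denseRange ⟨C, h⟩ v
  obtain ⟨g, hg, -⟩ := exists_extension_norm_eq (LinearMap.range J) f₀
  exact ⟨g, fun v ↦ (hg (J.rangeRestrict v)).trans (hf₀ v)⟩

theorem apply_eq_integral_of_norm_le [NormedSpace ℝ B] [CompleteSpace B]
    {X : Type*} [MeasurableSpace X] {μ : Measure X}
    (J : V →ₗ[𝕜] B) (f : V →ₗ[𝕜] 𝕜) {C : ℝ} (h : ∀ v, ‖f v‖ ≤ C * ‖J v‖) {T : X → V} {c : V}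
    (hT : Integrable (fun x ↦ J (T x)) μ) (hc : J c = ∫ x, J (T x) ∂μ) :
    f c = ∫ x, f (T x) ∂μ := by
  obtain ⟨g, hg⟩ := exists_strongDual_comp_eq_of_norm_le J f h
  rw [← hg, hc, ← g.integral_comp_comm hT]
  simp only [hg]

end DominatedFunctional

section WeightedDerivative

variable {E F : Type*} [NormedAddCommGroup E] [NormedSpace ℝ E]
  [NormedAddCommGroup F] [NormedSpace ℝ F]

/-- The weighted derivative `y ↦ ‖y‖ ^ k • D^l η y`, bundled as a bounded continuous function so
that its sup norm is the Schwartz seminorm of order `(k, l)`. -/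
def weightedDerivCLM (k l : ℕ) : 𝓢(E, F) →L[ℝ] E →ᵇ (E [×l]→L[ℝ] F) :=
  mkCLMtoNormedSpace
    (fun η ↦ BoundedContinuousFunction.ofNormedAddCommGroup
      (fun y ↦ ‖y‖ ^ k • iteratedFDeriv ℝ l η y)
      ((continuous_norm.pow k).smul ((η.smooth l).continuous_iteratedFDeriv le_rfl))
      (SchwartzMap.seminorm ℝ k l η)
      (fun y ↦ by simpa [norm_smul] using le_seminorm ℝ k l η y))
    (fun η₁ η₂ ↦ by
      ext1 y
      simp [FunLike.coe_add, iteratedFDeriv_add_apply (η₁.contDiffAt l) (η₂.contDiffAt l)])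
    (fun r η ↦ by
      ext1 y
      simp [FunLike.coe_smul, iteratedFDeriv_const_smul_apply (η.contDiffAt l), smul_comm r])
    ⟨{(k, l)}, 1, zero_le_one, fun η ↦ by
      simpa [schwartzSeminormFamily] using
        BoundedContinuousFunction.norm_ofNormedAddCommGroup_le _ (apply_nonneg _ _) _⟩

theorem weightedDerivCLM_apply (k l : ℕ) (η : 𝓢(E, F)) (y : E) :
    weightedDerivCLM k l η y = ‖y‖ ^ k • iteratedFDeriv ℝ l η y := rfl

theorem norm_weightedDerivCLM (k l : ℕ) (η : 𝓢(E, F)) :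
    ‖weightedDerivCLM k l η‖ = SchwartzMap.seminorm ℝ k l η := by
  apply le_antisymm
  · refine (BoundedContinuousFunction.norm_le (apply_nonneg _ _)).2 fun y ↦ ?_
    simpa [weightedDerivCLM_apply, norm_smul] using le_seminorm ℝ k l η y
  · refine seminorm_le_bound ℝ k l η (norm_nonneg _) fun y ↦ ?_
    simpa [weightedDerivCLM_apply, norm_smul] using
      (weightedDerivCLM k l η).norm_coe_le_norm y

theorem exists_norm_apply_le_weightedDerivCLM {G : Type*} [NormedAddCommGroup G]
    [NormedSpace ℝ G] (f : 𝓢(E, F) →L[ℝ] G) :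
    ∃ (s : Finset (ℕ × ℕ)) (C : ℝ),
      ∀ η, ‖f η‖ ≤ C * ‖fun i : s ↦ weightedDerivCLM i.1.1 i.1.2 η‖ := by
  obtain ⟨s, C, -, hC⟩ := Seminorm.bound_of_continuous (schwartz_withSeminorms ℝ E F)
    ((normSeminorm ℝ G).comp f.toLinearMap) (continuous_norm.comp f.continuous)
  refine ⟨s, C, fun η ↦ (hC η).trans ?_⟩
  rw [smul_apply, NNReal.smul_def, smul_eq_mul]
  gcongr
  refine Seminorm.finset_sup_apply_le (norm_nonneg _) fun i hi ↦ ?_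
  rw [schwartzSeminormFamily, ← norm_weightedDerivCLM]
  exact norm_le_pi_norm (fun i : s ↦ weightedDerivCLM i.1.1 i.1.2 η) ⟨i, hi⟩

end WeightedDerivative

section SchwartzIntegral

variable {E F : Type*} [NormedAddCommGroup E] [NormedSpace ℝ E]
  [NormedAddCommGroup F] [NormedSpace ℝ F] {X : Type*} [MeasurableSpace X]
  {T : X → 𝓢(E, F)} {μ : Measure X}

theorem curryLeft_integral_iteratedFDeriv (T : X → 𝓢(E, F)) (l : ℕ) (y : E) :
    (∫ x, iteratedFDeriv ℝ (l + 1) (T x) y ∂μ).curryLeft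
      = ∫ x, fderiv ℝ (iteratedFDeriv ℝ l (T x)) y ∂μ := by
  let L := continuousMultilinearCurryLeftEquiv ℝ (fun _ : Fin (l + 1) ↦ E) F
  refine (L.toContinuousLinearEquiv.integral_comp_comm _).symm.trans
    (integral_congr_ae (.of_forall fun x ↦ ?_))
  simp [L, iteratedFDeriv_succ_eq_comp_left]

/-- Integrability of a family of Schwartz functions. The Bochner integral is not available in the
non-normable space `𝓢(E, F)`, so integrability is imposed on all weighted derivatives. -/
def SchwartzIntegrable (T : X → 𝓢(E, F)) (μ : Measure X) : Prop :=
  ∀ k l, Integrable (fun x ↦ weightedDerivCLM k l (T x)) μ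

namespace SchwartzIntegrable

theorem integrable_iteratedFDeriv (hT : SchwartzIntegrable T μ) (l : ℕ) (y : E) :
    Integrable (fun x ↦ iteratedFDeriv ℝ l (T x) y) μ := by
  simpa [weightedDerivCLM_apply] using
    (BoundedContinuousFunction.evalCLM ℝ y).integrable_comp (hT 0 l)

theorem integrable_fderiv_iteratedFDeriv (hT : SchwartzIntegrable T μ) (l : ℕ) (y : E) :
    Integrable (fun x ↦ fderiv ℝ (iteratedFDeriv ℝ l (T x)) y) μ := by
  let L := continuousMultilinearCurryLeftEquiv ℝ (fun _ : Fin (l + 1) ↦ E) F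
  have h := L.toContinuousLinearEquiv.toContinuousLinearMap.integrable_comp
    (hT.integrable_iteratedFDeriv (l + 1) y)
  refine h.congr (.of_forall fun x ↦ ?_)
  simp [L, iteratedFDeriv_succ_eq_comp_left]

theorem hasFDerivAt_integral_iteratedFDeriv (hT : SchwartzIntegrable T μ) (l : ℕ) (y : E) :
    HasFDerivAt (fun y ↦ ∫ x, iteratedFDeriv ℝ l (T x) y ∂μ)
      (∫ x, fderiv ℝ (iteratedFDeriv ℝ l (T x)) y ∂μ) y := by
  refine hasFDerivAt_integral_of_dominated_of_fderiv_le
    (bound := fun x ↦ ‖weightedDerivCLM 0 (l + 1) (T x)‖)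
    (F' := fun z x ↦ fderiv ℝ (iteratedFDeriv ℝ l (T x)) z) univ_mem
    (.of_forall fun z ↦ (hT.integrable_iteratedFDeriv l z).aestronglyMeasurable)
    (hT.integrable_iteratedFDeriv l y)
    (hT.integrable_fderiv_iteratedFDeriv l y).aestronglyMeasurable
    (.of_forall fun x z _ ↦ ?_) (hT 0 (l + 1)).norm (.of_forall fun x z _ ↦ ?_)
  · rw [norm_fderiv_iteratedFDeriv, norm_weightedDerivCLM]
    exact norm_iteratedFDeriv_le_seminorm ℝ (T x) (l + 1) z
  · exact (((T x).smooth ⊤).differentiable_iteratedFDeriv (m := l)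
      (mod_cast WithTop.coe_lt_top l) z).hasFDerivAt

theorem hasFTaylorSeriesUpTo_integral (hT : SchwartzIntegrable T μ) :
    HasFTaylorSeriesUpTo ∞ (fun y ↦ ∫ x, T x y ∂μ)
      (fun y l ↦ ∫ x, iteratedFDeriv ℝ l (T x) y ∂μ) := by
  refine (hasFTaylorSeriesUpTo_top_iff' le_rfl).2 ⟨fun y ↦ ?_, fun l y ↦ ?_⟩
  · rw [ContinuousMultilinearMap.curry0,
      ContinuousMultilinearMap.integral_apply (hT.integrable_iteratedFDeriv 0 y)]
    simp only [iteratedFDeriv_zero_apply]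
  · exact (hT.hasFDerivAt_integral_iteratedFDeriv l y).congr_fderiv
      (curryLeft_integral_iteratedFDeriv T l y).symm

variable [CompleteSpace F]

theorem pow_norm_smul_iteratedFDeriv_integral (hT : SchwartzIntegrable T μ) (k l : ℕ) (y : E) :
    ‖y‖ ^ k • iteratedFDeriv ℝ l (fun y ↦ ∫ x, T x y ∂μ) y
      = (∫ x, weightedDerivCLM k l (T x) ∂μ) y := by
  rw [← hT.hasFTaylorSeriesUpTo_integral.eq_iteratedFDeriv (mod_cast le_top) y, ← integral_smul]
  exact (BoundedContinuousFunction.evalCLM ℝ y).integral_comp_comm (hT k l)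

end SchwartzIntegrable

variable [CompleteSpace F]

/-- The pointwise integral `y ↦ ∫ x, T x y ∂μ` of an integrable family of Schwartz functions, as a
Schwartz function. -/
def schwartzIntegral (hT : SchwartzIntegrable T μ) : 𝓢(E, F) where
  toFun y := ∫ x, T x y ∂μ
  smooth' := hT.hasFTaylorSeriesUpTo_integral.contDiff
  decay' k l := ⟨‖∫ x, weightedDerivCLM k l (T x) ∂μ‖, fun y ↦ by
    rw [← norm_norm y, ← norm_pow, ← norm_smul, hT.pow_norm_smul_iteratedFDeriv_integral]
    exact BoundedContinuousFunction.norm_coe_le_norm _ y⟩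

theorem weightedDerivCLM_schwartzIntegral (hT : SchwartzIntegrable T μ) (k l : ℕ) :
    weightedDerivCLM k l (schwartzIntegral hT) = ∫ x, weightedDerivCLM k l (T x) ∂μ :=
  BoundedContinuousFunction.ext (hT.pow_norm_smul_iteratedFDeriv_integral k l)

-- A functional on `𝓢` is controlled by finitely many seminorms, so it extends by Hahn–Banach to a
-- finite product of Banach spaces, where it commutes with the Bochner integral.
theorem apply_schwartzIntegral (hT : SchwartzIntegrable T μ) (f : 𝓢(E, F) →L[ℝ] ℝ) :
    f (schwartzIntegral hT) = ∫ x, f (T x) ∂μ := by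
  obtain ⟨s, C, hf⟩ := exists_norm_apply_le_weightedDerivCLM f
  let J := LinearMap.pi fun i : s ↦ (weightedDerivCLM (E := E) (F := F) i.1.1 i.1.2).toLinearMap
  have hJ (i : s) : Integrable (fun x ↦ J (T x) i) μ := hT i.1.1 i.1.2
  refine apply_eq_integral_of_norm_le J f.toLinearMap hf (.of_eval hJ) (funext fun i ↦ ?_)
  exact (weightedDerivCLM_schwartzIntegral hT i.1.1 i.1.2).trans (eval_integral hJ i).symm

end SchwartzIntegral

section Translation

variable {E F : Type*} [NormedAddCommGroup E] [NormedSpace ℝ E]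
  [NormedAddCommGroup F] [NormedSpace ℝ F]

theorem exists_pow_norm_mul_norm_iteratedFDeriv_le (k l : ℕ) (Θ : 𝓢(E, F)) :
    ∃ C, 0 ≤ C ∧ ∀ y w,
      ‖y‖ ^ k * ‖iteratedFDeriv ℝ l Θ w‖ ≤ C * (1 + ‖y - w‖) ^ k := by
  refine ⟨2 ^ k * (Finset.Iic (k, l)).sup (fun m ↦ SchwartzMap.seminorm ℝ m.1 m.2) Θ,
    by positivity, fun y w ↦ ?_⟩
  have hy : ‖y‖ ≤ (1 + ‖w‖) * (1 + ‖y - w‖) := by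
    nlinarith [norm_le_norm_add_norm_sub' y w, norm_nonneg w, norm_nonneg (y - w)]
  calc ‖y‖ ^ k * ‖iteratedFDeriv ℝ l Θ w‖
      ≤ ((1 + ‖w‖) * (1 + ‖y - w‖)) ^ k * ‖iteratedFDeriv ℝ l Θ w‖ := by gcongr
    _ = (1 + ‖w‖) ^ k * ‖iteratedFDeriv ℝ l Θ w‖ * (1 + ‖y - w‖) ^ k := by
      rw [mul_pow]; ring
    _ ≤ _ := by
      refine mul_le_mul_of_nonneg_right ?_ (by positivity)
      exact one_add_le_sup_seminorm_apply (𝕜 := ℝ) (m := (k, l)) le_rfl le_rfl Θ w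

theorem iteratedFDeriv_compSubConstCLM (l : ℕ) (Θ : 𝓢(E, F)) (x y : E) :
    iteratedFDeriv ℝ l (Θ.compSubConstCLM ℝ x) y = iteratedFDeriv ℝ l Θ (y - x) :=
  iteratedFDeriv_comp_sub l x y

theorem exists_seminorm_compSubConstCLM_le (k l : ℕ) (Θ : 𝓢(E, F)) :
    ∃ C, ∀ x, SchwartzMap.seminorm ℝ k l (Θ.compSubConstCLM ℝ x) ≤ C * (1 + ‖x‖) ^ k := by
  obtain ⟨C, hC₀, hC⟩ := exists_pow_norm_mul_norm_iteratedFDeriv_le k l Θ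
  refine ⟨C, fun x ↦ seminorm_le_bound ℝ k l _ (by positivity) fun y ↦ ?_⟩
  simpa [iteratedFDeriv_compSubConstCLM] using hC y (y - x)

theorem exists_seminorm_compSubConstCLM_sub_le (k l : ℕ) (Θ : 𝓢(E, F)) :
    ∃ C, ∀ h, SchwartzMap.seminorm ℝ k l (Θ.compSubConstCLM ℝ h - Θ)
      ≤ C * (1 + ‖h‖) ^ k * ‖h‖ := by
  obtain ⟨C, hC₀, hC⟩ := exists_pow_norm_mul_norm_iteratedFDeriv_le k (l + 1) Θ
  refine ⟨C, fun h ↦ seminorm_le_bound ℝ k l _ (by positivity) fun y ↦ ?_⟩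
  have hdiff : Differentiable ℝ (iteratedFDeriv ℝ l Θ) :=
    (Θ.smooth ⊤).differentiable_iteratedFDeriv (mod_cast WithTop.coe_lt_top l)
  have hbound (w : E) (hw : w ∈ Metric.closedBall y ‖h‖) :
      ‖fderiv ℝ (fun w ↦ ‖y‖ ^ k • iteratedFDeriv ℝ l Θ w) w‖ ≤ C * (1 + ‖h‖) ^ k := by
    rw [fderiv_fun_const_smul (hdiff w), norm_smul, norm_fderiv_iteratedFDeriv, norm_pow, norm_norm]
    refine (hC y w).trans ?_
    gcongr
    rwa [← dist_eq_norm, dist_comm, ← Metric.mem_closedBall]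
  have hmv := (convex_closedBall y ‖h‖).norm_image_sub_le_of_norm_fderiv_le (𝕜 := ℝ)
    (fun w _ ↦ (hdiff w).const_smul (‖y‖ ^ k)) hbound
    (Metric.mem_closedBall_self (norm_nonneg h)) (y := y - h) (by simp)
  rw [FunLike.coe_sub, iteratedFDeriv_sub_apply ((Θ.compSubConstCLM ℝ h).contDiffAt l)
    (Θ.contDiffAt l), iteratedFDeriv_compSubConstCLM]
  simpa [← smul_sub, norm_smul] using hmv

theorem continuous_compSubConstCLM_apply (Θ : 𝓢(E, F)) :
    Continuous fun x ↦ Θ.compSubConstCLM ℝ x := by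
  have hzero : Tendsto (fun h ↦ Θ.compSubConstCLM ℝ h) (𝓝 0) (𝓝 Θ) := by
    rw [(schwartz_withSeminorms ℝ E F).tendsto_nhds _ _]
    rintro ⟨k, l⟩ ε hε
    obtain ⟨C, hC⟩ := exists_seminorm_compSubConstCLM_sub_le k l Θ
    have hcont : Continuous fun h : E ↦ C * (1 + ‖h‖) ^ k * ‖h‖ := by fun_prop
    have hlim : Tendsto (fun h : E ↦ C * (1 + ‖h‖) ^ k * ‖h‖) (𝓝 0) (𝓝 0) := by
      simpa using hcont.tendsto 0
    exact (hlim.eventually_lt_const hε).mono fun h hh ↦ (hC h).trans_lt hh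
  refine continuous_iff_continuousAt.2 fun x ↦ ?_
  have hsub : Tendsto (· - x) (𝓝 x) (𝓝 0) := tendsto_sub_nhds_zero_iff.2 tendsto_id
  refine (((compSubConstCLM ℝ x).continuous.tendsto Θ).comp (hzero.comp hsub)).congr fun x' ↦ ?_
  simp

end Translation

section DistributionConvolution

variable {E F : Type*} [NormedAddCommGroup E] [NormedSpace ℝ E]
  [NormedAddCommGroup F] [NormedSpace ℝ F]

/-- The reflection `x ↦ Θ (-x)` of a Schwartz function. -/
def schwartzReflect (Θ : 𝓢(E, F)) : 𝓢(E, F) :=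
  compCLMOfContinuousLinearEquiv ℝ (ContinuousLinearEquiv.neg ℝ) Θ

@[simp]
theorem schwartzReflect_apply (Θ : 𝓢(E, F)) (x : E) : schwartzReflect Θ x = Θ (-x) := rfl

/-- The function `Θ * f`, whose value at `x` is the tempered distribution `f` applied to
`y ↦ Θ (x - y)`. -/
def distribConv (f : 𝓢(E, F) →L[ℝ] ℝ) (Θ : 𝓢(E, F)) (x : E) : ℝ :=
  f ((schwartzReflect Θ).compSubConstCLM ℝ x)

theorem apply_eq_distribConv (f : 𝓢(E, F) →L[ℝ] ℝ) {Θ T : 𝓢(E, F)} {x : E}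
    (hT : ∀ y, T y = Θ (x - y)) : f T = distribConv f Θ x := by
  have : T = (schwartzReflect Θ).compSubConstCLM ℝ x := by
    ext y
    simp [hT]
  rw [this, distribConv]

end DistributionConvolution

section Convolution

variable {E F : Type*} [NormedAddCommGroup E] [NormedSpace ℝ E] [MeasurableSpace E]
  [BorelSpace E] [SecondCountableTopology E] [NormedAddCommGroup F] [NormedSpace ℝ F]

theorem integrable_one_add_norm_pow_mul (μ : Measure E) [μ.HasTemperateGrowth]
    (k : ℕ) (g : 𝓢(E, F)) : Integrable (fun x ↦ (1 + ‖x‖) ^ k * ‖g x‖) μ := by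
  have hbound : Integrable (fun x ↦ 2 ^ (k - 1) * (‖g x‖ + ‖x‖ ^ k * ‖g x‖)) μ :=
    (g.integrable.norm.add (g.integrable_pow_mul μ k)).const_mul _
  refine hbound.mono' (by fun_prop) (.of_forall fun x ↦ ?_)
  rw [Real.norm_of_nonneg (by positivity)]
  calc (1 + ‖x‖) ^ k * ‖g x‖ ≤ 2 ^ (k - 1) * (1 ^ k + ‖x‖ ^ k) * ‖g x‖ := by
        gcongr
        exact add_pow_le zero_le_one (norm_nonneg x) k
    _ = _ := by ring

theorem schwartzIntegrable_smul_compSubConstCLM (μ : Measure E) [μ.HasTemperateGrowth]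
    (g : 𝓢(E, ℝ)) (Θ : 𝓢(E, F)) :
    SchwartzIntegrable (fun x ↦ g x • Θ.compSubConstCLM ℝ x) μ := fun k l ↦ by
  obtain ⟨C, hC⟩ := exists_seminorm_compSubConstCLM_le k l Θ
  have hcont : Continuous fun x ↦ g x • Θ.compSubConstCLM ℝ x :=
    g.continuous.smul (continuous_compSubConstCLM_apply Θ)
  refine ((integrable_one_add_norm_pow_mul μ k g).const_mul C).mono'
    ((weightedDerivCLM k l).continuous.comp hcont).aestronglyMeasurable (.of_forall fun x ↦ ?_)
  rw [norm_weightedDerivCLM, map_smul_eq_mul]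
  calc ‖g x‖ * SchwartzMap.seminorm ℝ k l (Θ.compSubConstCLM ℝ x)
      ≤ ‖g x‖ * (C * (1 + ‖x‖) ^ k) := by gcongr; exact hC x
    _ = _ := by ring

/-- The convolution `g ⋆[ContinuousLinearMap.lsmul ℝ ℝ, μ] Θ` of Schwartz functions, as a Schwartz
function: the superposition of the translates of `Θ` with density `g`. Mathlib's
`SchwartzMap.convolution` covers only complex values and inner product spaces. -/
def schwartzConv [CompleteSpace F] (μ : Measure E) [μ.HasTemperateGrowth]
    (g : 𝓢(E, ℝ)) (Θ : 𝓢(E, F)) : 𝓢(E, F) :=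
  schwartzIntegral (schwartzIntegrable_smul_compSubConstCLM μ g Θ)

variable {μ : Measure E} [μ.HasTemperateGrowth]

theorem schwartzConv_apply [CompleteSpace F] (g : 𝓢(E, ℝ)) (Θ : 𝓢(E, F)) (y : E) :
    schwartzConv μ g Θ y = ∫ x, g x • Θ (y - x) ∂μ := rfl

theorem schwartzConv_reflect_apply [CompleteSpace F] (g : 𝓢(E, ℝ)) (Θ : 𝓢(E, F)) (y : E) :
    schwartzConv μ g (schwartzReflect Θ) y = ∫ x, g x • Θ (x - y) ∂μ := by
  simp [schwartzConv_apply]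

theorem apply_schwartzConv_reflect [CompleteSpace F] (f : 𝓢(E, F) →L[ℝ] ℝ) (g : 𝓢(E, ℝ))
    (Θ : 𝓢(E, F)) :
    f (schwartzConv μ g (schwartzReflect Θ)) = ∫ x, g x * distribConv f Θ x ∂μ := by
  simp [schwartzConv, apply_schwartzIntegral, distribConv]

theorem support_schwartzConv_reflect_subset [CompleteSpace F] (g : 𝓢(E, ℝ)) (Θ : 𝓢(E, F)) :
    Function.support (schwartzConv μ g (schwartzReflect Θ))
      ⊆ Function.support g - Function.support Θ := by
  intro x hx
  contrapose! hx
  rw [Function.notMem_support, schwartzConv_reflect_apply]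
  refine integral_eq_zero_of_ae (.of_forall fun z ↦ ?_)
  by_contra hz
  rw [Pi.zero_apply, smul_eq_zero, not_or] at hz
  exact hx ⟨z, hz.1, z - x, hz.2, sub_sub_cancel z x⟩

theorem schwartzConv_reflect_schwartzConv [SFinite μ] [μ.IsAddRightInvariant]
    (g P Q : 𝓢(E, ℝ)) :
    schwartzConv μ g (schwartzReflect (schwartzConv μ P Q))
      = schwartzConv μ (schwartzConv μ g (schwartzReflect Q)) (schwartzReflect P) := by
  ext y
  have hint : Integrable (fun p : E × E ↦ Q (p.1 - p.2) * (g p.1 * P (p.2 - y))) (μ.prod μ) := by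
    refine (g.integrable.mul_prod (P.integrable.comp_sub_right y)).bdd_mul
      (c := SchwartzMap.seminorm ℝ 0 0 Q) ?_ (.of_forall fun p ↦ Q.norm_le_seminorm ℝ _)
    exact (Q.continuous.comp (continuous_fst.sub continuous_snd)).aestronglyMeasurable
  have hinner (x : E) : schwartzConv μ P Q (x - y) = ∫ w, Q (x - w) * P (w - y) ∂μ := by
    rw [schwartzConv_apply, ← integral_sub_right_eq_self _ y]
    simp only [sub_sub_sub_cancel_right, smul_eq_mul, mul_comm]
  calc schwartzConv μ g (schwartzReflect (schwartzConv μ P Q)) y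
      = ∫ x, ∫ w, Q (x - w) * (g x * P (w - y)) ∂μ ∂μ := by
        simp only [schwartzConv_reflect_apply, hinner, smul_eq_mul, ← integral_const_mul,
          mul_left_comm]
    _ = ∫ w, ∫ x, Q (x - w) * (g x * P (w - y)) ∂μ ∂μ := integral_integral_swap hint
    _ = _ := by
        simp only [schwartzConv_reflect_apply, smul_eq_mul, ← integral_mul_const,
          mul_left_comm, mul_assoc]

end Convolution

section AnisotropicDilation

variable {m : ℕ} {a : Fin m → ℝ}

/-- The anisotropic dilation `anisoDil a θ₀ θ j` of Schwartz functions, as a Schwartz function. -/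
def anisoDilSchwartz (a : Fin m → ℝ) (θ₀ θ : 𝓢(Fin m → ℝ, ℝ)) (j : ℕ) : 𝓢(Fin m → ℝ, ℝ) :=
  if j = 0 then θ₀
  else (2 : ℝ) ^ ((j : ℝ) * ∑ i, a i) • compCLMOfContinuousLinearEquiv ℝ
    (ContinuousLinearEquiv.piCongrRight fun i ↦ ContinuousLinearEquiv.smulLeft
      (Units.mk0 ((2 : ℝ) ^ ((j : ℝ) * a i)) (by positivity))) θ

theorem coe_anisoDilSchwartz (θ₀ θ : 𝓢(Fin m → ℝ, ℝ)) (j : ℕ) :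
    ⇑(anisoDilSchwartz a θ₀ θ j) = anisoDil a θ₀ θ j := by
  ext x
  unfold anisoDilSchwartz anisoDil
  split_ifs <;> rfl

theorem support_anisoDil_subset_setOf_neg {θ₀ θ : (Fin m → ℝ) → ℝ} {i : Fin m}
    (h₀ : Function.support θ₀ ⊆ {x | x i < 0}) (h : Function.support θ ⊆ {x | x i < 0}) (j : ℕ) :
    Function.support (anisoDil a θ₀ θ j) ⊆ {x | x i < 0} := by
  intro x hx
  rw [Function.mem_support, anisoDil] at hx
  split_ifs at hx with hj
  · exact h₀ hx
  · have hlt : (2 : ℝ) ^ ((j : ℝ) * a i) * x i < 0 := h (right_ne_zero_of_mul hx)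
    exact neg_of_mul_neg_right hlt (by positivity)

theorem support_sub_support_anisoDil_subset_setOf_pos {χ θ₀ θ : (Fin m → ℝ) → ℝ} {i : Fin m}
    (hχ : Function.support χ ⊆ {x | 0 < x i}) (h₀ : Function.support θ₀ ⊆ {x | x i < 0})
    (h : Function.support θ ⊆ {x | x i < 0}) (j : ℕ) :
    Function.support χ - Function.support (anisoDil a θ₀ θ j) ⊆ {x | 0 < x i} := by
  rintro _ ⟨z, hz, w, hw, rfl⟩
  have hw' : w i < 0 := support_anisoDil_subset_setOf_neg h₀ h j hw
  exact sub_pos.2 (hw'.trans (hχ hz))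

end AnisotropicDilation

section Calderon

variable {E : Type*} [NormedAddCommGroup E] [NormedSpace ℝ E] [MeasurableSpace E] [BorelSpace E]
  [SecondCountableTopology E] {μ : Measure E} [μ.HasTemperateGrowth] [SFinite μ]
  [μ.IsAddRightInvariant]

theorem setIntegral_distribConv_mul_integral (f : 𝓢(E, ℝ) →L[ℝ] ℝ) (χ Φ Ψ : 𝓢(E, ℝ)) {H : Set E}
    (hH : Function.support χ - Function.support Ψ ⊆ H) :
    ∫ x in H, distribConv f Φ x * ∫ z, Ψ (z - x) * χ z ∂μ ∂μ
      = f (schwartzConv μ χ (schwartzReflect (schwartzConv μ Φ Ψ))) := by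
  have hsupp (x : E) (hx : x ∉ H) : schwartzConv μ χ (schwartzReflect Ψ) x = 0 :=
    Function.notMem_support.1 fun h ↦ hx (hH (support_schwartzConv_reflect_subset χ Ψ h))
  calc ∫ x in H, distribConv f Φ x * ∫ z, Ψ (z - x) * χ z ∂μ ∂μ
      = ∫ x in H, schwartzConv μ χ (schwartzReflect Ψ) x * distribConv f Φ x ∂μ := by
        simp only [schwartzConv_reflect_apply, smul_eq_mul, mul_comm]
    _ = ∫ x, schwartzConv μ χ (schwartzReflect Ψ) x * distribConv f Φ x ∂μ :=
        setIntegral_eq_integral_of_forall_compl_eq_zero fun x hx ↦ by rw [hsupp x hx, zero_mul]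
    _ = f (schwartzConv μ χ (schwartzReflect (schwartzConv μ Φ Ψ))) := by
        rw [schwartzConv_reflect_schwartzConv, apply_schwartzConv_reflect]

theorem universal_extension_is_extension_general (f : 𝓢(E, ℝ) →L[ℝ] ℝ) (χ : 𝓢(E, ℝ))
    (Φ Ψ : ℕ → 𝓢(E, ℝ)) {H : Set E}
    (hH : ∀ j, Function.support χ - Function.support (Ψ j) ⊆ H)
    (hCalderon : Tendsto (fun N ↦ ∑ j ∈ Finset.range N,
      f (schwartzConv μ χ (schwartzReflect (schwartzConv μ (Φ j) (Ψ j))))) atTop (𝓝 (f χ))) :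
    Tendsto (fun N ↦ ∑ j ∈ Finset.range N,
      ∫ x in H, distribConv f (Φ j) x * ∫ z, Ψ j (z - x) * χ z ∂μ ∂μ) atTop (𝓝 (f χ)) := by
  simpa only [setIntegral_distribConv_mul_integral f χ _ _ (hH _)] using hCalderon

end Calderon

/-- With `φ₀, φ, ψ₀, ψ ∈ 𝓢(ℝⁿ)` supported in `{xₙ < 0}`, `φ, ψ` having
vanishing moments of all orders, and assuming the Calderón reproducing formula, the extension
operator `E_u(f) = Σ_j ψ_j * e₊(φ_j * f)` satisfies `⟨E_u(f), χ⟩ = ⟨f, χ⟩` for every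
`f ∈ 𝓢'(ℝⁿ)` and every smooth compactly supported `χ` with `supp χ ⊆ {xₙ > 0}`. -/
theorem universal_extension_is_extension (n : ℕ) (a : Fin (n+1) → ℝ)
    (ha : ∀ i, 1 ≤ a i)
    (φ₀ φ ψ₀ ψ : SchwartzMap (Fin (n+1) → ℝ) ℝ)
    (hφ₀s : tsupport ⇑φ₀ ⊆ {x : Fin (n+1) → ℝ | x (Fin.last n) < 0})
    (hφs : tsupport ⇑φ ⊆ {x : Fin (n+1) → ℝ | x (Fin.last n) < 0})
    (hψ₀s : tsupport ⇑ψ₀ ⊆ {x : Fin (n+1) → ℝ | x (Fin.last n) < 0})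
    (hψs : tsupport ⇑ψ ⊆ {x : Fin (n+1) → ℝ | x (Fin.last n) < 0})
    (hφm : VanishingMoments ⇑φ) (hψm : VanishingMoments ⇑ψ)
    -- Calderón reproducing formula: `u = Σ_j ψ_j * (φ_j * u)` weak* in `𝓢'(ℝⁿ)`
    (hCalderon : ∀ (u : SchwartzMap (Fin (n+1) → ℝ) ℝ →L[ℝ] ℝ)
        (η : SchwartzMap (Fin (n+1) → ℝ) ℝ)
        (c : ℕ → SchwartzMap (Fin (n+1) → ℝ) ℝ),
        (∀ (j : ℕ) (x : Fin (n+1) → ℝ),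
          c j x = ∫ y : Fin (n+1) → ℝ,
            (∫ z : Fin (n+1) → ℝ,
              anisoDil a ⇑ψ₀ ⇑ψ j ((y - x) - z) * anisoDil a ⇑φ₀ ⇑φ j z) * η y) →
        Tendsto (fun N => ∑ j ∈ Finset.range N, u (c j)) atTop (nhds (u η)))
    (f : SchwartzMap (Fin (n+1) → ℝ) ℝ →L[ℝ] ℝ)
    (χ : SchwartzMap (Fin (n+1) → ℝ) ℝ) (hχc : HasCompactSupport ⇑χ)
    (hχs : tsupport ⇑χ ⊆ {x : Fin (n+1) → ℝ | 0 < x (Fin.last n)})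
    -- `tr j x` is the Schwartz function `y ↦ φ_j(x − y)`, so `(φ_j * f)(x) = f (tr j x)`
    (tr : ℕ → (Fin (n+1) → ℝ) → SchwartzMap (Fin (n+1) → ℝ) ℝ)
    (htr : ∀ (j : ℕ) (x y : Fin (n+1) → ℝ), tr j x y = anisoDil a ⇑φ₀ ⇑φ j (x - y)) :
    Tendsto (fun N => ∑ j ∈ Finset.range N,
        ∫ x in {x : Fin (n+1) → ℝ | 0 < x (Fin.last n)},
          f (tr j x) * (∫ z : Fin (n+1) → ℝ, anisoDil a ⇑ψ₀ ⇑ψ j (z - x) * χ z))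
      atTop (nhds (f χ)) := by
  have hsupp (j : ℕ) : Function.support χ - Function.support (anisoDilSchwartz a ψ₀ ψ j)
      ⊆ {x | 0 < x (Fin.last n)} := by
    rw [coe_anisoDilSchwartz]
    exact support_sub_support_anisoDil_subset_setOf_pos ((subset_tsupport _).trans hχs)
      ((subset_tsupport _).trans hψ₀s) ((subset_tsupport _).trans hψs) j
  have hlim := universal_extension_is_extension_general (μ := volume) f χ
    (anisoDilSchwartz a φ₀ φ) (anisoDilSchwartz a ψ₀ ψ) hsupp <| hCalderon f χ _ fun j x ↦ by
      rw [schwartzConv_reflect_apply]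
      simp only [schwartzConv_apply, coe_anisoDilSchwartz, smul_eq_mul, mul_comm]
  have htr' (j : ℕ) (x : Fin (n + 1) → ℝ) :
      f (tr j x) = distribConv f (anisoDilSchwartz a φ₀ φ j) x :=
    apply_eq_distribConv f fun y ↦ by rw [htr, coe_anisoDilSchwartz]
  simpa only [htr', coe_anisoDilSchwartz] using hlim

end
end
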